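/- Suppose b_σ ≠ 0 and μ₀ is a probability distribution on [0,∞) that is not the point mass at 0. Then for each ℓ ≥ 1 and every z = (z₋₁, z₀, …, z_ℓ) ∈ ℂ⁻ × ℝ^ℓ × ℂ*, there exists a unique solution s_ℓ(z) ∈ ℂ⁺ to the fixed-point equation s_ℓ(z) = 1/z_ℓ + γ_ℓ t_{ℓ−1}(z_prev(s_ℓ(z), z), (1−b_σ², 0, …, 0, b_σ²)). -/

import Mathlib

/-!
Proposition (well-posedness of the fixed-point equations): if `b_σ ≠ 0` and `μ₀` is a
probability distribution on `[0,∞)` that is not the point mass at `0`, then for each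
`ℓ ≥ 1` and every `z ∈ ℂ⁻ × ℝ^ℓ × ℂ*` there is a unique solution `s_ℓ(z) ∈ ℂ⁺` of the
fixed-point equation defining the recursion for `t_ℓ`.
-/

open MeasureTheory Filter Topology

/-- The domain `ℂ⁻ × ℝ^ℓ × ℂ*` for the argument `z = (z₋₁, z₀, …, z_ℓ)`:
the first entry lies in the open lower half-plane, the middle entries are real, and the
last entry lies in the closed lower half-plane with `0` removed. -/
def InDomZ {ℓ : ℕ} (zv : Fin (ℓ + 2) → ℂ) : Prop :=
  (zv 0).im < 0 ∧
  (∀ i : Fin (ℓ + 2), i ≠ 0 → i ≠ Fin.last (ℓ + 1) → (zv i).im = 0) ∧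
  (zv (Fin.last (ℓ + 1))).im ≤ 0 ∧ zv (Fin.last (ℓ + 1)) ≠ 0

/-- `z_prev(s, z) = (z₋₁ + (1−b²)/s, z₀, …, z_{ℓ−2}, z_{ℓ−1} + b²/s)`. -/
noncomputable def zprevVec (b : ℝ) {ℓ : ℕ} (s : ℂ) (zv : Fin (ℓ + 3) → ℂ) :
    Fin (ℓ + 2) → ℂ :=
  fun i => zv i.castSucc + (if i = 0 then (1 - (b : ℂ) ^ 2) / s else 0) +
    (if i = Fin.last (ℓ + 1) then (b : ℂ) ^ 2 / s else 0)

/-- `w_prev = (w₋₁, …, w_{ℓ−1}) − (w_ℓ / z_ℓ)·(z₋₁, …, z_{ℓ−1})`. -/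
noncomputable def wprevVec {ℓ : ℕ} (zv wv : Fin (ℓ + 3) → ℂ) : Fin (ℓ + 2) → ℂ :=
  fun i => wv i.castSucc - (wv (Fin.last (ℓ + 2)) / zv (Fin.last (ℓ + 2))) * zv i.castSucc

/-- The vector `(1 − b², 0, …, 0, b²)`. -/
noncomputable def eVec (b : ℝ) (ℓ : ℕ) : Fin (ℓ + 2) → ℂ :=
  fun i => if i = 0 then 1 - (b : ℂ) ^ 2 else if i = Fin.last (ℓ + 1) then (b : ℂ) ^ 2 else 0

/-!
Put `X = -z₋₁`, `Y = -z_ℓ`, so that the equation reads `s = -1/Y + γ F(X, -1/s)` with `X` in the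
open upper half-plane and `Y` in its closure. A holomorphic self-map of the upper half-plane does
not increase the hyperbolic gap `‖a - b‖² / (im a · im b)`, and this Schwarz–Pick inequality can
replace holomorphy throughout. Since `F` contracts strictly, two solutions coincide.
For existence, approximate the right-hand side by maps with relatively compact image, which have
fixed points by Edelstein's theorem, and pass to a limit. If the fixed points escaped to a boundary
point, the map would preserve all horodisks there (Wolff's lemma), which the growth of `F` near the
boundary rules out.

The conditions on `F` used in this argument form the notion `IsAdmissible`. They hold for the
integral defining `t₀` unless `μ₀` is the point mass at `0`, and they pass from one level to the
next: `t_ℓ(z, ·)` is linear with value `1` at `z`, and eliminating `s` expresses the coefficient of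
`w_{ℓ+1}` as the Schur-complement expression `-1/(γ Y - 1/F(X, -1/s))`.
-/

/-- The involution `s ↦ -1/s` of the upper half-plane. With `X = -z₋₁` and `Y = -z_ℓ`, the
fixed-point equation only involves `s` through `negInv s`. -/
noncomputable def negInv (s : ℂ) : ℂ := -s⁻¹

lemma ne_zero_of_im_pos {s : ℂ} (hs : 0 < s.im) : s ≠ 0 := by
  rintro rfl
  simp at hs

lemma norm_pos_of_im_pos {s : ℂ} (hs : 0 < s.im) : 0 < ‖s‖ :=
  norm_pos_iff.2 (ne_zero_of_im_pos hs)

lemma negInv_im (s : ℂ) : (negInv s).im = s.im / ‖s‖ ^ 2 := by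
  simp [negInv, Complex.inv_im, Complex.normSq_eq_norm_sq, neg_div]

lemma negInv_im_pos {s : ℂ} (hs : 0 < s.im) : 0 < (negInv s).im := by
  have := norm_pos_of_im_pos hs
  rw [negInv_im]
  positivity

lemma negInv_neg (s : ℂ) : negInv (-s) = s⁻¹ := by
  rw [negInv, inv_neg, neg_neg]

lemma negInv_negInv (s : ℂ) : negInv (negInv s) = s := by simp [negInv]

lemma norm_negInv (s : ℂ) : ‖negInv s‖ = ‖s‖⁻¹ := by simp [negInv]

lemma norm_negInv_le {s : ℂ} {d : ℝ} (hd : 0 < d) (h : d ≤ s.im) : ‖negInv s‖ ≤ 1 / d := by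
  rw [norm_negInv, ← one_div]
  exact one_div_le_one_div_of_le hd (h.trans (Complex.im_le_norm s))

lemma tendsto_negInv {ι : Type*} {l : Filter ι} {u : ι → ℂ} {a : ℂ} (h : Tendsto u l (𝓝 a))
    (ha : a ≠ 0) : Tendsto (fun i => negInv (u i)) l (𝓝 (negInv a)) :=
  (h.inv₀ ha).neg

lemma tendsto_im {ι : Type*} {l : Filter ι} {u : ι → ℂ} {a : ℂ} (h : Tendsto u l (𝓝 a)) :
    Tendsto (fun i => (u i).im) l (𝓝 a.im) :=
  (Complex.continuous_im.tendsto a).comp h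

lemma norm_negInv_sub_negInv_sq {a b : ℂ} (ha : a ≠ 0) (hb : b ≠ 0) :
    ‖negInv a - negInv b‖ ^ 2 = ‖a - b‖ ^ 2 / (‖a‖ ^ 2 * ‖b‖ ^ 2) := by
  have : negInv a - negInv b = (a - b) / (a * b) := by
    unfold negInv
    field_simp
    ring
  rw [this, norm_div, norm_mul, div_pow, mul_pow]

/-- Two points `a, b` of the closed upper half-plane are within hyperbolic distance `d`, where
`k = 4 sinh² (d / 2)`. Clearing the denominator lets `a` and `b` be real. -/
def HypClose (k : ℝ) (a b : ℂ) : Prop := ‖a - b‖ ^ 2 ≤ k * (a.im * b.im)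

/-- The strict version of `HypClose`. -/
def HypStrictClose (k : ℝ) (a b : ℂ) : Prop := ‖a - b‖ ^ 2 < k * (a.im * b.im)

/-- The function `4 sinh² (d(a, b) / 2)` of the hyperbolic distance `d`: the least `k` with
`HypClose k a b` when `a` and `b` lie in the open upper half-plane. -/
noncomputable def hypGap (a b : ℂ) : ℝ := ‖a - b‖ ^ 2 / (a.im * b.im)

section HypClose

variable {k : ℝ} {a b c d : ℂ}

lemma hypClose_iff (ha : 0 < a.im) (hb : 0 < b.im) : HypClose k a b ↔ hypGap a b ≤ k := by
  rw [HypClose, hypGap, div_le_iff₀ (by positivity)]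

lemma hypStrictClose_iff (ha : 0 < a.im) (hb : 0 < b.im) :
    HypStrictClose k a b ↔ hypGap a b < k := by
  rw [HypStrictClose, hypGap, div_lt_iff₀ (by positivity)]

lemma hypClose_hypGap (ha : 0 < a.im) (hb : 0 < b.im) : HypClose (hypGap a b) a b :=
  (hypClose_iff ha hb).2 le_rfl

lemma hypGap_nonneg (ha : 0 < a.im) (hb : 0 < b.im) : 0 ≤ hypGap a b := by
  unfold hypGap
  positivity

lemma hypGap_pos (ha : 0 < a.im) (hb : 0 < b.im) (h : a ≠ b) : 0 < hypGap a b := by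
  have := norm_pos_iff.2 (sub_ne_zero.2 h)
  unfold hypGap
  positivity

lemma tendsto_hypGap {ι : Type*} {l : Filter ι} {u v : ι → ℂ} (ha : 0 < a.im) (hb : 0 < b.im)
    (hu : Tendsto u l (𝓝 a)) (hv : Tendsto v l (𝓝 b)) :
    Tendsto (fun i => hypGap (u i) (v i)) l (𝓝 (hypGap a b)) :=
  ((hu.sub hv).norm.pow 2).div ((tendsto_im hu).mul (tendsto_im hv)) (by positivity)

lemma tendsto_hypGap_self {ι : Type*} {l : Filter ι} {u : ι → ℂ} (ha : 0 < a.im)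
    (hu : Tendsto u l (𝓝 a)) : Tendsto (fun i => hypGap (u i) a) l (𝓝 0) := by
  simpa [hypGap] using tendsto_hypGap ha ha hu tendsto_const_nhds

lemma HypClose.nonneg (h : HypClose k a b) (ha : 0 < a.im) (hb : 0 < b.im) : 0 ≤ k :=
  (hypGap_nonneg ha hb).trans ((hypClose_iff ha hb).1 h)

lemma HypClose.refl (hk : 0 ≤ k) (a : ℂ) : HypClose k a a := by
  simpa [HypClose] using mul_nonneg hk (mul_self_nonneg a.im)

lemma HypStrictClose.refl (hk : 0 < k) (ha : 0 < a.im) : HypStrictClose k a a := by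
  simpa [HypStrictClose] using mul_pos hk (mul_pos ha ha)

lemma HypStrictClose.hypClose (h : HypStrictClose k a b) : HypClose k a b := h.le

lemma HypClose.strict_of_lt {k' : ℝ} (h : HypClose k a b) (ha : 0 < a.im) (hb : 0 < b.im)
    (hk : k < k') : HypStrictClose k' a b :=
  (hypStrictClose_iff ha hb).2 (((hypClose_iff ha hb).1 h).trans_lt hk)

lemma HypClose.negInv (h : HypClose k a b) (ha : 0 < a.im) (hb : 0 < b.im) :
    HypClose k (negInv a) (negInv b) := by
  have hna := norm_pos_of_im_pos ha
  have hnb := norm_pos_of_im_pos hb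
  rw [HypClose, norm_negInv_sub_negInv_sq (ne_zero_of_im_pos ha) (ne_zero_of_im_pos hb),
    negInv_im, negInv_im, div_mul_div_comm, mul_div_assoc']
  exact div_le_div_of_nonneg_right h (by positivity)

lemma HypStrictClose.negInv (h : HypStrictClose k a b) (ha : 0 < a.im) (hb : 0 < b.im) :
    HypStrictClose k (negInv a) (negInv b) := by
  rw [hypStrictClose_iff ha hb] at h
  exact ((hypClose_hypGap ha hb).negInv ha hb).strict_of_lt (negInv_im_pos ha)
    (negInv_im_pos hb) h

lemma HypClose.real_mul (h : HypClose k a b) (r : ℝ) : HypClose k (r * a) (r * b) := by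
  unfold HypClose at *
  rw [← mul_sub, norm_mul, mul_pow, Complex.norm_real, Real.norm_eq_abs, sq_abs,
    Complex.im_ofReal_mul, Complex.im_ofReal_mul]
  calc r ^ 2 * ‖a - b‖ ^ 2 ≤ r ^ 2 * (k * (a.im * b.im)) := by gcongr
    _ = k * (r * a.im * (r * b.im)) := by ring

lemma HypStrictClose.real_mul (h : HypStrictClose k a b) {r : ℝ} (hr : r ≠ 0) :
    HypStrictClose k (r * a) (r * b) := by
  unfold HypStrictClose at *
  rw [← mul_sub, norm_mul, mul_pow, Complex.norm_real, Real.norm_eq_abs, sq_abs,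
    Complex.im_ofReal_mul, Complex.im_ofReal_mul]
  calc r ^ 2 * ‖a - b‖ ^ 2 < r ^ 2 * (k * (a.im * b.im)) := by gcongr
    _ = k * (r * a.im * (r * b.im)) := by ring

lemma HypClose.real_add (h : HypClose k a b) (r : ℝ) : HypClose k (r + a) (r + b) := by
  simpa [HypClose] using h

/-- The mixed term in the expansion of `(‖a - b‖ + ‖c - d‖) ^ 2` is absorbed by AM-GM. -/
lemma HypClose.two_mul_norm_sub_mul_norm_sub_le (hk : 0 ≤ k) (ha : 0 ≤ a.im) (hb : 0 ≤ b.im)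
    (hc : 0 ≤ c.im) (hd : 0 ≤ d.im) (hab : HypClose k a b) (hcd : HypClose k c d) :
    2 * (‖a - b‖ * ‖c - d‖) ≤ k * (a.im * d.im + c.im * b.im) := by
  have hprod : (‖a - b‖ * ‖c - d‖) ^ 2 ≤ (k * (a.im * b.im)) * (k * (c.im * d.im)) := by
    rw [mul_pow]
    exact mul_le_mul hab hcd (by positivity) (by positivity)
  refine le_of_sq_le_sq ?_ (by positivity)
  nlinarith [sq_nonneg (k * (a.im * d.im - c.im * b.im))]

lemma norm_add_sub_add_sq_le (a b c d : ℂ) :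
    ‖a + c - (b + d)‖ ^ 2 ≤ ‖a - b‖ ^ 2 + 2 * (‖a - b‖ * ‖c - d‖) + ‖c - d‖ ^ 2 := by
  have : ‖a + c - (b + d)‖ ≤ ‖a - b‖ + ‖c - d‖ := by
    rw [add_sub_add_comm]
    exact norm_add_le _ _
  calc ‖a + c - (b + d)‖ ^ 2 ≤ (‖a - b‖ + ‖c - d‖) ^ 2 := by gcongr
    _ = _ := by ring

lemma HypClose.add (hk : 0 ≤ k) (ha : 0 ≤ a.im) (hb : 0 ≤ b.im) (hc : 0 ≤ c.im)
    (hd : 0 ≤ d.im) (hab : HypClose k a b) (hcd : HypClose k c d) :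
    HypClose k (a + c) (b + d) := by
  have hcross := hab.two_mul_norm_sub_mul_norm_sub_le hk ha hb hc hd hcd
  have hexpand := norm_add_sub_add_sq_le a b c d
  unfold HypClose at *
  simp only [Complex.add_im]
  linarith

lemma HypStrictClose.add (hk : 0 ≤ k) (ha : 0 ≤ a.im) (hb : 0 ≤ b.im) (hc : 0 ≤ c.im)
    (hd : 0 ≤ d.im) (hab : HypStrictClose k a b) (hcd : HypClose k c d) :
    HypStrictClose k (a + c) (b + d) := by
  have hcross := hab.hypClose.two_mul_norm_sub_mul_norm_sub_le hk ha hb hc hd hcd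
  have hexpand := norm_add_sub_add_sq_le a b c d
  unfold HypClose HypStrictClose at *
  simp only [Complex.add_im]
  linarith

lemma HypClose.add_strict (hk : 0 ≤ k) (ha : 0 ≤ a.im) (hb : 0 ≤ b.im) (hc : 0 ≤ c.im)
    (hd : 0 ≤ d.im) (hab : HypClose k a b) (hcd : HypStrictClose k c d) :
    HypStrictClose k (a + c) (b + d) := by
  rw [add_comm a, add_comm b]
  exact hcd.add hk hc hd ha hb hab

lemma HypClose.add_I_strict (h : HypClose k a b) (hk : 0 < k) (ha : 0 < a.im) (hb : 0 < b.im)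
    {r : ℝ} (hr : 0 < r) :
    HypStrictClose k (a + r * Complex.I) (b + r * Complex.I) := by
  have hI : 0 < ((r : ℂ) * Complex.I).im := by simpa using hr
  exact h.add_strict hk.le ha.le hb.le hI.le hI.le (HypStrictClose.refl hk hI)

lemma HypClose.im_le_four_mul (h : HypClose (1 / 4) a b) (ha : 0 < a.im) (hb : 0 < b.im) :
    b.im ≤ 4 * a.im := by
  have hsub : b.im - a.im ≤ ‖a - b‖ := by
    simpa [norm_sub_rev] using Complex.im_le_norm (b - a)
  by_contra! hlt
  have hsq : (b.im - a.im) ^ 2 ≤ 1 / 4 * (a.im * b.im) :=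
    (pow_le_pow_left₀ (by linarith) hsub 2).trans h
  nlinarith

/-- Since `b.im ≤ a.im + ‖b - a‖`, closeness to a fixed `a` is a quadratic inequality
for `‖b - a‖`. -/
lemma HypClose.norm_sub_sq_le (h : HypClose k b a) (hk : 0 ≤ k) (ha : 0 < a.im) :
    ‖b - a‖ ^ 2 ≤ (2 * k + k ^ 2) * a.im ^ 2 := by
  have him : b.im ≤ a.im + ‖b - a‖ := by
    have := Complex.im_le_norm (b - a)
    rw [Complex.sub_im] at this
    linarith
  have hquad : ‖b - a‖ ^ 2 ≤ k * ((a.im + ‖b - a‖) * a.im) := h.trans (by gcongr)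
  nlinarith [sq_nonneg (‖b - a‖ - k * a.im)]

lemma tendsto_of_hypClose {ι : Type*} {l : Filter ι} {u : ι → ℂ} {κ : ι → ℝ} (ha : 0 < a.im)
    (hκ : Tendsto κ l (𝓝 0)) (hκ0 : ∀ᶠ i in l, 0 ≤ κ i) (h : ∀ᶠ i in l, HypClose (κ i) (u i) a) :
    Tendsto u l (𝓝 a) := by
  have hbound : Tendsto (fun i => (2 * κ i + κ i ^ 2) * a.im ^ 2) l (𝓝 0) := by
    simpa using ((hκ.const_mul 2).add (hκ.pow 2)).mul_const (a.im ^ 2)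
  have hsq : Tendsto (fun i => ‖u i - a‖ ^ 2) l (𝓝 0) :=
    squeeze_zero' (.of_forall fun i => by positivity)
      (by filter_upwards [h, hκ0] with i hi hi0 using hi.norm_sub_sq_le hi0 ha) hbound
  rw [tendsto_iff_norm_sub_tendsto_zero]
  simpa [Real.sqrt_sq] using hsq.sqrt

end HypClose

/-- A self-map of the upper half-plane that does not increase hyperbolic distances. Its values
off the upper half-plane are irrelevant. -/
structure IsHypNonexpansive (g : ℂ → ℂ) : Prop where
  im_pos : ∀ {a : ℂ}, 0 < a.im → 0 < (g a).im
  hypClose : ∀ {k : ℝ} {a b : ℂ}, 0 < a.im → 0 < b.im → HypClose k a b → HypClose k (g a) (g b)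

/-- A map of two upper half-plane variables into the upper half-plane that does not increase
hyperbolic distances, the product carrying the maximum of the two distances. -/
structure IsHypNonexpansive₂ (f : ℂ → ℂ → ℂ) : Prop where
  im_pos : ∀ {x y : ℂ}, 0 < x.im → 0 < y.im → 0 < (f x y).im
  hypClose : ∀ {k : ℝ} {x y x' y' : ℂ}, 0 < x.im → 0 < y.im → 0 < x'.im → 0 < y'.im →
    HypClose k x x' → HypClose k y y' → HypClose k (f x y) (f x' y')

lemma isHypNonexpansive_negInv : IsHypNonexpansive negInv where
  im_pos := negInv_im_pos
  hypClose ha hb h := h.negInv ha hb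

lemma isHypNonexpansive_add_I {r : ℝ} (hr : 0 ≤ r) :
    IsHypNonexpansive fun a => a + r * Complex.I where
  im_pos ha := by simpa using add_pos_of_pos_of_nonneg ha hr
  hypClose ha hb h := by
    have hI : 0 ≤ ((r : ℂ) * Complex.I).im := by simpa using hr
    have hk := h.nonneg ha hb
    exact h.add hk ha.le hb.le hI hI (.refl hk _)

lemma IsHypNonexpansive.comp {f g : ℂ → ℂ} (hf : IsHypNonexpansive f)
    (hg : IsHypNonexpansive g) : IsHypNonexpansive (f ∘ g) where
  im_pos ha := hf.im_pos (hg.im_pos ha)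
  hypClose ha hb h := hf.hypClose (hg.im_pos ha) (hg.im_pos hb) (hg.hypClose ha hb h)

lemma IsHypNonexpansive₂.tendsto {f : ℂ → ℂ → ℂ} (hf : IsHypNonexpansive₂ f) {ι : Type*}
    {l : Filter ι} {x y : ι → ℂ} {X Y : ℂ} (hX : 0 < X.im) (hY : 0 < Y.im)
    (hx : Tendsto x l (𝓝 X)) (hy : Tendsto y l (𝓝 Y)) :
    Tendsto (fun i => f (x i) (y i)) l (𝓝 (f X Y)) := by
  have hgap : Tendsto (fun i => max (hypGap (x i) X) (hypGap (y i) Y)) l (𝓝 0) := by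
    simpa using (tendsto_hypGap_self hX hx).max (tendsto_hypGap_self hY hy)
  have hpos : ∀ᶠ i in l, 0 < (x i).im ∧ 0 < (y i).im :=
    ((tendsto_im hx).eventually_const_lt hX).and ((tendsto_im hy).eventually_const_lt hY)
  refine tendsto_of_hypClose (hf.im_pos hX hY) hgap ?_ ?_
  · filter_upwards [hpos] with i hi using (hypGap_nonneg hi.1 hX).trans (le_max_left _ _)
  · filter_upwards [hpos] with i hi
    exact hf.hypClose hi.1 hi.2 hX hY ((hypClose_iff hi.1 hX).2 (le_max_left _ _))
      ((hypClose_iff hi.2 hY).2 (le_max_right _ _))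

section FixedPoints

variable {g : ℂ → ℂ}

/-- Edelstein's argument: a point minimising the displacement `hypGap a (f a)` is fixed. -/
lemma exists_fixedPoint_of_isCompact {f : ℂ → ℂ} {K : Set ℂ} (hK : IsCompact K)
    (hne : K.Nonempty) (hpos : ∀ a ∈ K, 0 < a.im) (hmaps : Set.MapsTo f K K)
    (hcontr : ∀ a ∈ K, ∀ b ∈ K, a ≠ b → hypGap (f a) (f b) < hypGap a b) :
    ∃ a ∈ K, f a = a := by
  have hcont : ContinuousOn f K := fun a ha => by
    refine tendsto_of_hypClose (hpos _ (hmaps ha))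
      (tendsto_hypGap_self (hpos a ha) continuousWithinAt_id.tendsto) ?_ ?_
    · filter_upwards [self_mem_nhdsWithin] with b hb using hypGap_nonneg (hpos b hb) (hpos a ha)
    · filter_upwards [self_mem_nhdsWithin] with b hb
      rw [hypClose_iff (hpos _ (hmaps hb)) (hpos _ (hmaps ha))]
      rcases eq_or_ne b a with rfl | hba
      · simp [hypGap]
      · exact (hcontr b hb a ha hba).le
  have hdisp : ContinuousOn (fun a => hypGap a (f a)) K := fun a ha =>
    tendsto_hypGap (hpos a ha) (hpos _ (hmaps ha)) continuousWithinAt_id (hcont a ha)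
  obtain ⟨a, ha, hmin⟩ := hK.exists_isMinOn hne hdisp
  refine ⟨a, ha, ?_⟩
  by_contra hfa
  exact (hcontr a ha _ (hmaps ha) (Ne.symm hfa)).not_ge (hmin (hmaps ha))

/-- A perturbation of `g` whose values stay in a compact subset of the upper half-plane. -/
noncomputable def regularize (g : ℂ → ℂ) (d : ℝ) (a : ℂ) : ℂ :=
  negInv (negInv (g a + d * Complex.I) + d * Complex.I)

lemma isHypNonexpansive_regularize (hg : IsHypNonexpansive g) {d : ℝ} (hd : 0 ≤ d) :
    IsHypNonexpansive (regularize g d) :=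
  (isHypNonexpansive_negInv.comp (isHypNonexpansive_add_I hd)).comp
    ((isHypNonexpansive_negInv.comp (isHypNonexpansive_add_I hd)).comp hg)

lemma tendsto_regularize {a : ℂ} (ha : 0 < (g a).im) {ι : Type*} {l : Filter ι} {d : ι → ℝ}
    (hd : Tendsto d l (𝓝 0)) : Tendsto (fun i => regularize g (d i) a) l (𝓝 (g a)) := by
  have hI : Tendsto (fun i => (d i : ℂ) * Complex.I) l (𝓝 0) := by
    simpa using ((Complex.continuous_ofReal.tendsto 0).comp hd).mul_const Complex.I
  have hinner : Tendsto (fun i => negInv (g a + d i * Complex.I)) l (𝓝 (negInv (g a))) := by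
    simpa using tendsto_negInv (hI.const_add (g a)) (by simpa using ne_zero_of_im_pos ha)
  simpa [regularize, negInv_negInv] using tendsto_negInv (hinner.add hI)
    (by simpa using ne_zero_of_im_pos (negInv_im_pos ha))

/-- The fixed point is found in the coordinate `q = negInv s`, where `regularize g d` maps into
`{‖q‖ ≤ 1 / d + d, d ≤ q.im}`. -/
lemma IsHypNonexpansive.exists_fixedPoint_regularize (hg : IsHypNonexpansive g) {d : ℝ}
    (hd : 0 < d) : ∃ s : ℂ, 0 < s.im ∧ regularize g d s = s := by
  set h : ℂ → ℂ := fun q => negInv (g (negInv q) + d * Complex.I)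
  have hnonexp : IsHypNonexpansive h :=
    (isHypNonexpansive_negInv.comp (isHypNonexpansive_add_I hd.le)).comp
      (hg.comp isHypNonexpansive_negInv)
  set K : Set ℂ := Metric.closedBall 0 (1 / d + d) ∩ {q | d ≤ q.im}
  have hK : IsCompact K :=
    (isCompact_closedBall _ _).inter_right (isClosed_le continuous_const Complex.continuous_im)
  have hpos : ∀ q ∈ K, 0 < q.im := fun q hq => hd.trans_le hq.2
  have hnorm : ‖(d : ℂ) * Complex.I‖ = d := by simp [abs_of_pos hd]
  have hmaps : ∀ q, 0 < q.im → h q + d * Complex.I ∈ K := fun q hq => by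
    have hgq := hg.im_pos (negInv_im_pos hq)
    refine ⟨mem_closedBall_zero_iff.2 ((norm_add_le _ _).trans ?_), ?_⟩
    · rw [hnorm]
      gcongr
      exact norm_negInv_le hd (by simpa using hgq.le)
    · simpa using (hnonexp.im_pos hq).le
  obtain ⟨q, hq, hfix⟩ := exists_fixedPoint_of_isCompact (f := fun q => h q + d * Complex.I) hK
    ⟨_, hmaps Complex.I (by simp)⟩ hpos (fun q hq => hmaps q (hpos q hq))
    fun a ha b hb hab => (hypStrictClose_iff (hpos _ (hmaps a (hpos a ha)))
      (hpos _ (hmaps b (hpos b hb)))).1 <|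
      (hnonexp.hypClose (hpos a ha) (hpos b hb)
        (hypClose_hypGap (hpos a ha) (hpos b hb))).add_I_strict
        (hypGap_pos (hpos a ha) (hpos b hb) hab) (hnonexp.im_pos (hpos a ha))
        (hnonexp.im_pos (hpos b hb)) hd
  exact ⟨negInv q, negInv_im_pos (hpos q hq), congrArg negInv hfix⟩

/-- `g` maps every horodisk at the boundary point `p ∈ ℝ` into itself (Wolff's condition). -/
def PreservesHorodisks (g : ℂ → ℂ) (p : ℝ) : Prop :=
  ∀ a : ℂ, 0 < a.im → ‖p - g a‖ ^ 2 * a.im ≤ ‖p - a‖ ^ 2 * (g a).im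

/-- `g` maps every horodisk at the boundary point `∞` into itself, these being half-planes. -/
def PreservesHorodisksAtInfty (g : ℂ → ℂ) : Prop :=
  ∀ a : ℂ, 0 < a.im → a.im ≤ (g a).im

lemma PreservesHorodisks.norm_sub_le {p : ℝ} (h : PreservesHorodisks g p) {ε : ℝ} (hε : 0 < ε) :
    ‖p - g (p + ε * Complex.I)‖ ≤ ε := by
  set b := g (p + ε * Complex.I)
  have hb : b.im ≤ ‖p - b‖ := by simpa [norm_sub_rev] using Complex.im_le_norm (b - p)
  have hsq : ‖p - b‖ ^ 2 * ε ≤ ε ^ 2 * b.im := by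
    simpa [abs_of_pos hε] using h (p + ε * Complex.I) (by simpa using hε)
  by_contra! hlt
  nlinarith [mul_pos hε (hε.trans hlt)]

lemma IsHypNonexpansive.norm_sub_sq_mul_im_le (hg : IsHypNonexpansive g) {s a : ℂ}
    (hs : 0 < s.im) (hfix : g s = s) (ha : 0 < a.im) :
    ‖s - g a‖ ^ 2 * a.im ≤ ‖s - a‖ ^ 2 * (g a).im := by
  have hclose := hg.hypClose hs ha (hypClose_hypGap hs ha)
  rw [hfix, HypClose, hypGap] at hclose
  calc ‖s - g a‖ ^ 2 * a.im ≤ ‖s - a‖ ^ 2 / (s.im * a.im) * (s.im * (g a).im) * a.im := by gcongr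
    _ = ‖s - a‖ ^ 2 * (g a).im := by field_simp

section Limits

variable {f : ℕ → ℂ → ℂ} {s : ℕ → ℂ}

lemma fixedPoint_or_preservesHorodisks_of_tendsto {p : ℂ}
    (hf : ∀ᶠ n in atTop, IsHypNonexpansive (f n)) (hs : ∀ᶠ n in atTop, 0 < (s n).im)
    (hfix : ∀ᶠ n in atTop, f n (s n) = s n)
    (hfg : ∀ a, 0 < a.im → Tendsto (fun n => f n a) atTop (𝓝 (g a)))
    (hp : Tendsto s atTop (𝓝 p)) :
    (0 < p.im ∧ g p = p) ∨ ∃ r : ℝ, PreservesHorodisks g r := by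
  have hp0 : 0 ≤ p.im := ge_of_tendsto (tendsto_im hp) (hs.mono fun n => le_of_lt)
  have hlim : ∀ a, 0 < a.im → ‖p - g a‖ ^ 2 * a.im ≤ ‖p - a‖ ^ 2 * (g a).im := fun a ha => by
    refine le_of_tendsto_of_tendsto (((hp.sub (hfg a ha)).norm.pow 2).mul_const a.im)
      (((hp.sub_const a).norm.pow 2).mul (tendsto_im (hfg a ha))) ?_
    filter_upwards [hf, hs, hfix] with n hfn hsn hfixn
      using hfn.norm_sub_sq_mul_im_le hsn hfixn ha
  rcases hp0.eq_or_lt with hreal | hpos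
  · have hpre : (p.re : ℂ) = p := Complex.ext rfl (by simpa using hreal)
    exact .inr ⟨p.re, by rwa [PreservesHorodisks, hpre]⟩
  · have hzero : ‖p - g p‖ ^ 2 * p.im ≤ 0 := by simpa using hlim p hpos
    have hnorm : ‖p - g p‖ ^ 2 ≤ 0 := nonpos_of_mul_nonpos_left hzero hpos
    exact .inl ⟨hpos, (sub_eq_zero.1 (by simpa using hnorm)).symm⟩

lemma preservesHorodisksAtInfty_of_tendsto
    (hf : ∀ᶠ n in atTop, IsHypNonexpansive (f n)) (hs : ∀ᶠ n in atTop, 0 < (s n).im)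
    (hfix : ∀ᶠ n in atTop, f n (s n) = s n)
    (hfg : ∀ a, 0 < a.im → Tendsto (fun n => f n a) atTop (𝓝 (g a)))
    (hinf : Tendsto (fun n => ‖s n‖) atTop atTop) : PreservesHorodisksAtInfty g := by
  intro a ha
  have hinv : Tendsto (fun n => (s n)⁻¹) atTop (𝓝 0) := by
    rw [tendsto_zero_iff_norm_tendsto_zero]
    simp only [norm_inv]
    exact hinf.inv_tendsto_atTop
  have hleft : Tendsto (fun n => ‖1 - f n a * (s n)⁻¹‖ ^ 2 * a.im) atTop (𝓝 a.im) := by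
    simpa using ((((hfg a ha).mul hinv).const_sub 1).norm.pow 2).mul_const a.im
  have hright : Tendsto (fun n => ‖1 - a * (s n)⁻¹‖ ^ 2 * (f n a).im) atTop (𝓝 (g a).im) := by
    simpa using (((hinv.const_mul a).const_sub 1).norm.pow 2).mul (tendsto_im (hfg a ha))
  refine le_of_tendsto_of_tendsto hleft hright ?_
  filter_upwards [hf, hs, hfix] with n hfn hsn hfixn
  have hscale : ∀ c : ℂ, ‖1 - c * (s n)⁻¹‖ ^ 2 = ‖s n - c‖ ^ 2 / ‖s n‖ ^ 2 := fun c => by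
    have := ne_zero_of_im_pos hsn
    rw [← div_pow, ← norm_div]
    congr 2
    field_simp
  rw [hscale, hscale, div_mul_eq_mul_div, div_mul_eq_mul_div]
  exact div_le_div_of_nonneg_right (hfn.norm_sub_sq_mul_im_le hsn hfixn ha) (by positivity)

/-- The Denjoy–Wolff dichotomy: fixed points of maps converging to `g` either accumulate at a
fixed point of `g`, or at a boundary point whose horodisks `g` preserves. -/
lemma exists_subseq_tendsto_fixedPoint
    (hf : ∀ᶠ n in atTop, IsHypNonexpansive (f n)) (hs : ∀ᶠ n in atTop, 0 < (s n).im)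
    (hfix : ∀ᶠ n in atTop, f n (s n) = s n)
    (hfg : ∀ a, 0 < a.im → Tendsto (fun n => f n a) atTop (𝓝 (g a)))
    (hreal : ∀ r : ℝ, ¬ PreservesHorodisks g r) (hinfty : ¬ PreservesHorodisksAtInfty g) :
    ∃ (φ : ℕ → ℕ) (p : ℂ), StrictMono φ ∧ Tendsto (s ∘ φ) atTop (𝓝 p) ∧ 0 < p.im ∧ g p = p := by
  by_cases hbdd : ∃ R : ℝ, ∃ᶠ n in atTop, s n ∈ Metric.closedBall (0 : ℂ) R
  · obtain ⟨R, hR⟩ := hbdd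
    obtain ⟨p, -, φ, hφ, hp⟩ :=
      tendsto_subseq_of_frequently_bounded Metric.isBounded_closedBall hR
    have hφtop := hφ.tendsto_atTop
    rcases fixedPoint_or_preservesHorodisks_of_tendsto (hφtop.eventually hf)
      (hφtop.eventually hs) (hφtop.eventually hfix) (fun a ha => (hfg a ha).comp hφtop) hp
      with ⟨hpos, hgp⟩ | ⟨r, hr⟩
    · exact ⟨φ, p, hφ, hp, hpos, hgp⟩
    · exact absurd hr (hreal r)
  · refine absurd (preservesHorodisksAtInfty_of_tendsto hf hs hfix hfg ?_) hinfty
    rw [tendsto_atTop]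
    intro R
    by_contra hR
    refine hbdd ⟨R, (not_eventually.1 hR).mono fun n hn => ?_⟩
    simpa using (not_le.1 hn).le

end Limits

lemma IsHypNonexpansive.exists_fixedPoint (hg : IsHypNonexpansive g)
    (hreal : ∀ r : ℝ, ¬ PreservesHorodisks g r) (hinfty : ¬ PreservesHorodisksAtInfty g) :
    ∃ s : ℂ, 0 < s.im ∧ g s = s := by
  have hd : ∀ n : ℕ, 0 < 1 / ((n : ℝ) + 1) := fun n => Nat.one_div_pos_of_nat
  choose s hs hfix using fun n => hg.exists_fixedPoint_regularize (hd n)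
  obtain ⟨-, p, -, -, hp, hgp⟩ := exists_subseq_tendsto_fixedPoint
    (.of_forall fun n => isHypNonexpansive_regularize hg (hd n).le) (.of_forall hs)
    (.of_forall hfix)
    (fun a ha => tendsto_regularize (hg.im_pos ha) tendsto_one_div_add_atTop_nhds_zero_nat)
    hreal hinfty
  exact ⟨p, hp, hgp⟩

end FixedPoints

/-- Nontangential approach to `(X, c)`: the second variable tends to the boundary point `c ∈ ℝ`
inside a cone of aperture `M`. -/
noncomputable def nontangential (X : ℂ) (c M : ℝ) : Filter (ℂ × ℂ) :=
  𝓝[{p | 0 < p.1.im ∧ 0 < p.2.im ∧ ‖p.2 - c‖ ≤ M * p.2.im}] (X, (c : ℂ))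

section Nontangential

variable {X : ℂ} {c M : ℝ}

lemma tendsto_nontangential {ι : Type*} {l : Filter ι} {x y : ι → ℂ} (hX : 0 < X.im)
    (hx : Tendsto x l (𝓝 X)) (hy : Tendsto y l (𝓝 c)) (hpos : ∀ᶠ i in l, 0 < (y i).im)
    (hcone : ∀ᶠ i in l, ‖y i - c‖ ≤ M * (y i).im) :
    Tendsto (fun i => (x i, y i)) l (nontangential X c M) :=
  tendsto_nhdsWithin_iff.2 ⟨hx.prodMk_nhds hy,
    ((tendsto_im hx).eventually_const_lt hX).and (hpos.and hcone)⟩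

lemma eventually_nontangential :
    ∀ᶠ p : ℂ × ℂ in nontangential X c M, 0 < p.1.im ∧ 0 < p.2.im ∧ ‖p.2 - c‖ ≤ M * p.2.im :=
  self_mem_nhdsWithin

lemma tendsto_fst_nontangential : Tendsto Prod.fst (nontangential X c M) (𝓝 X) :=
  (continuous_fst.tendsto (X, (c : ℂ))).mono_left nhdsWithin_le_nhds

lemma tendsto_snd_nontangential : Tendsto Prod.snd (nontangential X c M) (𝓝 (c : ℂ)) :=
  (continuous_snd.tendsto (X, (c : ℂ))).mono_left nhdsWithin_le_nhds

lemma tendsto_add_mul_I (p : ℝ) :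
    Tendsto (fun ε : ℝ => (p : ℂ) + ε * Complex.I) (𝓝[>] 0) (𝓝 p) := by
  have hcont : Continuous fun ε : ℝ => (p : ℂ) + ε * Complex.I := by fun_prop
  simpa using (hcont.tendsto 0).mono_left nhdsWithin_le_nhds

lemma eventually_im_add_mul_I_pos (p : ℝ) :
    ∀ᶠ ε : ℝ in 𝓝[>] 0, 0 < ((p : ℂ) + ε * Complex.I).im := by
  filter_upwards [self_mem_nhdsWithin] with ε hε
  simpa using hε

/-- Inversion carries the vertical approach to `p` into a cone at `-1/p`. -/
lemma tendsto_negInv_add_mul_I_nontangential (hX : 0 < X.im) {p : ℝ} (hp : p ≠ 0) :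
    Tendsto (fun ε : ℝ => (X, negInv (p + ε * Complex.I))) (𝓝[>] 0)
      (nontangential X (-p⁻¹) ((|p| + 1) / |p|)) := by
  have hpc : (p : ℂ) ≠ 0 := by exact_mod_cast hp
  have hcoe : negInv p = ((-p⁻¹ : ℝ) : ℂ) := by simp [negInv]
  have hpos := eventually_im_add_mul_I_pos p
  refine tendsto_nontangential hX tendsto_const_nhds ?_ (hpos.mono fun ε => negInv_im_pos) ?_
  · rw [← hcoe]
    exact tendsto_negInv (tendsto_add_mul_I p) hpc
  have hnorm : ∀ᶠ ε : ℝ in 𝓝[>] 0, ‖(p : ℂ) + ε * Complex.I‖ ≤ |p| + 1 :=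
    (tendsto_add_mul_I p).norm.eventually_le_const (by simp)
  filter_upwards [self_mem_nhdsWithin, hpos, hnorm] with ε (hε : 0 < ε) hpos hnorm
  set a := (p : ℂ) + ε * Complex.I
  have ha := norm_pos_of_im_pos hpos
  have := abs_pos.2 hp
  have hdist : ‖negInv a - negInv p‖ = ε / (‖a‖ * |p|) := by
    have hsq := norm_negInv_sub_negInv_sq (ne_zero_of_im_pos hpos) hpc
    have hap : ‖a - p‖ = ε := by simp [a, abs_of_pos hε]
    rw [hap, Complex.norm_real, Real.norm_eq_abs, ← mul_pow, ← div_pow] at hsq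
    exact (pow_left_inj₀ (norm_nonneg _) (by positivity) two_ne_zero).1 hsq
  have him : a.im = ε := by simp [a]
  rw [← hcoe, hdist, negInv_im, him]
  calc ε / (‖a‖ * |p|) = ‖a‖ / |p| * (ε / ‖a‖ ^ 2) := by field_simp
    _ ≤ (|p| + 1) / |p| * (ε / ‖a‖ ^ 2) := by gcongr

end Nontangential

/-- Functions of two upper half-plane variables for which the fixed-point equation
`s = w + γ F(X, -1/s)` is well posed, and which the recursion reproduces. The last two fields
control `F` where its second variable degenerates to a boundary point: `F` has no pole there,
and its imaginary part does not vanish. -/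
structure IsAdmissible (F : ℂ → ℂ → ℂ) : Prop extends IsHypNonexpansive₂ F where
  strict : ∀ {k : ℝ} {x y x' y' : ℂ}, 0 < x.im → 0 < y.im → 0 < x'.im → 0 < y'.im →
    HypStrictClose k x x' → HypClose k y y' → HypStrictClose k (F x y) (F x' y')
  exists_norm_le : ∃ C : ℝ, ∀ {x y : ℂ}, 0 < x.im → 0 < y.im → ‖F x y‖ ≤ C / y.im
  tendsto_sub_mul : ∀ {X : ℂ} {c M : ℝ}, 0 < X.im →
    Tendsto (fun p : ℂ × ℂ => (p.2 - c) * F p.1 p.2) (nontangential X c M) (𝓝 0)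
  exists_le_im : ∀ {X : ℂ} {c M : ℝ}, 0 < X.im →
    ∃ κ : ℝ, 0 < κ ∧ ∀ᶠ p : ℂ × ℂ in nontangential X c M, κ ≤ (F p.1 p.2).im

/-- The right-hand side `w + γ F(X, -1/s)` of the fixed-point equation, as a function of `s`. -/
noncomputable def fixedPointMap (γ : ℝ) (w : ℂ) (F : ℂ → ℂ → ℂ) (X s : ℂ) : ℂ :=
  w + γ * F X (negInv s)

section FixedPointMap

variable {γ : ℝ} {w X : ℂ} {F : ℂ → ℂ → ℂ}

lemma IsHypNonexpansive₂.fixedPointMap (hF : IsHypNonexpansive₂ F) (hγ : 0 < γ)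
    (hX : 0 < X.im) (hw : 0 ≤ w.im) : IsHypNonexpansive (fixedPointMap γ w F X) := by
  have hpos : ∀ {a : ℂ}, 0 < a.im → 0 < ((γ : ℂ) * F X (negInv a)).im := fun ha => by
    simpa using mul_pos hγ (hF.im_pos hX (negInv_im_pos ha))
  refine ⟨fun ha => by simpa [_root_.fixedPointMap] using add_pos_of_nonneg_of_pos hw (hpos ha),
    fun {k a b} ha hb h => ?_⟩
  have hk := h.nonneg ha hb
  refine (HypClose.refl hk w).add hk hw hw (hpos ha).le (hpos hb).le ?_
  exact (hF.hypClose hX (negInv_im_pos ha) hX (negInv_im_pos hb) (.refl hk X)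
    (h.negInv ha hb)).real_mul γ

lemma IsAdmissible.fixedPoint_unique (hF : IsAdmissible F) (hγ : 0 < γ) (hX : 0 < X.im)
    (hw : 0 ≤ w.im) {s s' : ℂ} (hs : 0 < s.im) (hs' : 0 < s'.im)
    (h : fixedPointMap γ w F X s = s) (h' : fixedPointMap γ w F X s' = s') : s = s' := by
  by_contra hne
  have hk := hypGap_pos hs hs' hne
  have hFs := hF.im_pos hX (negInv_im_pos hs)
  have hFs' := hF.im_pos hX (negInv_im_pos hs')
  have hstrict : HypStrictClose (hypGap s s') (γ * F X (negInv s)) (γ * F X (negInv s')) :=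
    (hF.strict hX (negInv_im_pos hs) hX (negInv_im_pos hs') (.refl hk hX)
      ((hypClose_hypGap hs hs').negInv hs hs')).real_mul hγ.ne'
  have hlt : HypStrictClose (hypGap s s') (fixedPointMap γ w F X s) (fixedPointMap γ w F X s') :=
    (HypClose.refl hk.le w).add_strict hk.le hw hw (by simpa using (mul_pos hγ hFs).le)
      (by simpa using (mul_pos hγ hFs').le) hstrict
  rw [h, h', hypStrictClose_iff hs hs'] at hlt
  exact lt_irrefl _ hlt

lemma IsAdmissible.not_preservesHorodisksAtInfty (hF : IsAdmissible F) (hX : 0 < X.im) :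
    ¬ PreservesHorodisksAtInfty (fixedPointMap γ w F X) := by
  intro h
  set v : ℝ → ℂ := fun ε => (0 : ℝ) + ε * Complex.I
  have hv : Tendsto v (𝓝[>] 0) (𝓝 (0 : ℝ)) := tendsto_add_mul_I 0
  have hvpos := eventually_im_add_mul_I_pos 0
  have hnorm : ∀ ε : ℝ, 0 < ε → ‖v ε‖ = ε := fun ε hε => by simp [v, abs_of_pos hε]
  have him : ∀ ε : ℝ, (v ε).im = ε := fun ε => by simp [v]
  have hcone : ∀ᶠ ε : ℝ in 𝓝[>] 0, ‖v ε - (0 : ℝ)‖ ≤ 1 * (v ε).im := by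
    filter_upwards [self_mem_nhdsWithin] with ε hε
    simp [hnorm ε hε, him]
  have hF0 : Tendsto (fun ε => v ε * F X (v ε)) (𝓝[>] 0) (𝓝 0) := by
    simpa [Function.comp_def] using (hF.tendsto_sub_mul hX).comp
      (tendsto_nontangential hX tendsto_const_nhds hv hvpos hcone)
  have hprod : Tendsto (fun ε => ‖v ε * (w + γ * F X (v ε))‖) (𝓝[>] 0) (𝓝 0) := by
    rw [← tendsto_zero_iff_norm_tendsto_zero]
    have := (hv.mul_const w).add (hF0.const_mul (γ : ℂ))
    simp only [Complex.ofReal_zero, zero_mul, mul_zero, add_zero] at this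
    exact this.congr fun ε => by ring
  have hone : ∀ᶠ ε in 𝓝[>] 0, 1 ≤ ‖v ε * (w + γ * F X (v ε))‖ := by
    filter_upwards [self_mem_nhdsWithin, hvpos] with ε (hε : 0 < ε) hvε
    have hle : 1 / ε ≤ ‖w + γ * F X (v ε)‖ := by
      have := (h _ (negInv_im_pos hvε)).trans (Complex.im_le_norm _)
      rwa [fixedPointMap, negInv_negInv, negInv_im, hnorm ε hε, him, sq,
        div_mul_cancel_left₀ hε.ne', ← one_div] at this
    rw [norm_mul, hnorm ε hε]
    exact (div_le_iff₀' hε).1 hle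
  exact absurd (ge_of_tendsto hprod hone) (by norm_num)

lemma IsAdmissible.not_preservesHorodisks_zero (hF : IsAdmissible F) (hX : 0 < X.im)
    (hw : w ≠ 0) : ¬ PreservesHorodisks (fixedPointMap γ w F X) 0 := by
  intro h
  obtain ⟨C, hC⟩ := hF.exists_norm_le
  have hbound : ∀ᶠ ε : ℝ in 𝓝[>] 0, ‖w‖ ≤ ε + |γ| * (C * ε) := by
    filter_upwards [self_mem_nhdsWithin] with ε (hε : 0 < ε)
    have hmap := h.norm_sub_le hε
    have hpos : 0 < ((ε : ℂ) * Complex.I).im := by simpa using hε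
    have him : (negInv (ε * Complex.I)).im = ε⁻¹ := by simp [negInv]
    have hFle := hC hX (negInv_im_pos hpos)
    rw [him, div_inv_eq_mul] at hFle
    simp only [Complex.ofReal_zero, zero_add, zero_sub, norm_neg, fixedPointMap] at hmap
    set T := F X (negInv (ε * Complex.I))
    calc ‖w‖ = ‖(w + γ * T) - γ * T‖ := by ring_nf
      _ ≤ ‖w + γ * T‖ + ‖(γ : ℂ) * T‖ := norm_sub_le _ _
      _ ≤ ε + |γ| * (C * ε) := by
        rw [norm_mul, Complex.norm_real, Real.norm_eq_abs]
        gcongr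
  have hlim : Tendsto (fun ε : ℝ => ε + |γ| * (C * ε)) (𝓝[>] 0) (𝓝 0) := by
    have hcont : Continuous fun ε : ℝ => ε + |γ| * (C * ε) := by fun_prop
    simpa using (hcont.tendsto 0).mono_left nhdsWithin_le_nhds
  exact hw (norm_le_zero_iff.1 (ge_of_tendsto hlim hbound))

lemma IsAdmissible.not_preservesHorodisks_of_ne_zero (hF : IsAdmissible F) (hγ : 0 < γ)
    (hX : 0 < X.im) (hw : 0 ≤ w.im) {p : ℝ} (hp : p ≠ 0) :
    ¬ PreservesHorodisks (fixedPointMap γ w F X) p := by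
  intro h
  obtain ⟨κ, hκ, hle⟩ := hF.exists_le_im hX
  have hbound : ∀ᶠ ε : ℝ in 𝓝[>] 0, γ * κ ≤ ε := by
    filter_upwards [(tendsto_negInv_add_mul_I_nontangential hX hp).eventually hle,
      self_mem_nhdsWithin] with ε hκε (hε : 0 < ε)
    have him := Complex.abs_im_le_norm (p - fixedPointMap γ w F X (p + ε * Complex.I))
    calc γ * κ ≤ w.im + γ * (F X (negInv (p + ε * Complex.I))).im :=
          le_add_of_nonneg_of_le hw (by gcongr)
      _ ≤ ‖p - fixedPointMap γ w F X (p + ε * Complex.I)‖ := by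
        refine le_trans (le_of_eq ?_) ((neg_le_abs _).trans him)
        simp [fixedPointMap]
      _ ≤ ε := h.norm_sub_le hε
  have hlim : Tendsto (fun ε : ℝ => ε) (𝓝[>] 0) (𝓝 0) := nhdsWithin_le_nhds
  exact (mul_pos hγ hκ).not_ge (ge_of_tendsto hlim hbound)

lemma IsAdmissible.not_preservesHorodisks (hF : IsAdmissible F) (hγ : 0 < γ) (hX : 0 < X.im)
    (hw : 0 ≤ w.im) (hw0 : w ≠ 0) (p : ℝ) : ¬ PreservesHorodisks (fixedPointMap γ w F X) p := by
  rcases eq_or_ne p 0 with rfl | hp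
  · exact hF.not_preservesHorodisks_zero hX hw0
  · exact hF.not_preservesHorodisks_of_ne_zero hγ hX hw hp

lemma IsAdmissible.exists_fixedPoint (hF : IsAdmissible F) (hγ : 0 < γ) (hX : 0 < X.im)
    (hw : 0 ≤ w.im) (hw0 : w ≠ 0) : ∃ s : ℂ, 0 < s.im ∧ fixedPointMap γ w F X s = s :=
  (hF.fixedPointMap hγ hX hw).exists_fixedPoint (hF.not_preservesHorodisks hγ hX hw hw0)
    (hF.not_preservesHorodisksAtInfty hX)

lemma IsAdmissible.tendsto_fixedPoint (hF : IsAdmissible F) (hγ : 0 < γ) {ι : Type*}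
    {l : Filter ι} [l.IsCountablyGenerated] {x u s : ι → ℂ} {S : ℂ} (hX : 0 < X.im)
    (hw : 0 ≤ w.im) (hw0 : w ≠ 0) (hx : Tendsto x l (𝓝 X)) (hu : Tendsto u l (𝓝 w))
    (hu0 : ∀ᶠ i in l, 0 ≤ (u i).im) (hs : ∀ᶠ i in l, 0 < (s i).im)
    (hfix : ∀ᶠ i in l, fixedPointMap γ (u i) F (x i) (s i) = s i)
    (hS : 0 < S.im) (hSfix : fixedPointMap γ w F X S = S) : Tendsto s l (𝓝 S) := by
  have hx0 := (tendsto_im hx).eventually_const_lt hX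
  refine tendsto_of_subseq_tendsto fun ns hns => ?_
  obtain ⟨φ, p, -, hp, hpos, hpfix⟩ := exists_subseq_tendsto_fixedPoint (s := s ∘ ns)
    (f := fun n => fixedPointMap γ (u (ns n)) F (x (ns n))) (g := fixedPointMap γ w F X)
    (hns.eventually ((hx0.and hu0).mono fun i hi => hF.fixedPointMap hγ hi.1 hi.2))
    (hns.eventually hs) (hns.eventually hfix)
    (fun a ha => (hu.comp hns).add ((hF.toIsHypNonexpansive₂.tendsto hX (negInv_im_pos ha)
      (hx.comp hns) tendsto_const_nhds).const_mul _))
    (hF.not_preservesHorodisks hγ hX hw hw0) (hF.not_preservesHorodisksAtInfty hX)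
  obtain rfl := hF.fixedPoint_unique hγ hX hw hpos hS hpfix hSfix
  exact ⟨φ, hp⟩

end FixedPointMap

/-- A fixed point of `G` in the upper half-plane, with a junk value if there is none. -/
noncomputable def upperFixedPoint (G : ℂ → ℂ) : ℂ :=
  Classical.epsilon fun s => 0 < s.im ∧ G s = s

lemma upperFixedPoint_spec {G : ℂ → ℂ} (h : ∃ s : ℂ, 0 < s.im ∧ G s = s) :
    0 < (upperFixedPoint G).im ∧ G (upperFixedPoint G) = upperFixedPoint G :=
  Classical.epsilon_spec h

lemma upperFixedPoint_congr {G G' : ℂ → ℂ} (h : ∀ s : ℂ, 0 < s.im → G s = G' s) :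
    upperFixedPoint G = upperFixedPoint G' := by
  have hpred : (fun s : ℂ => 0 < s.im ∧ G s = s) = fun s => 0 < s.im ∧ G' s = s :=
    funext fun s => propext (and_congr_right fun hs => by rw [h s hs])
  rw [upperFixedPoint, hpred, upperFixedPoint]

/-- The solution `s` of `s = -1/Y + γ F(X, -1/s)`. -/
noncomputable def solution (γ : ℝ) (F : ℂ → ℂ → ℂ) (X Y : ℂ) : ℂ :=
  upperFixedPoint (fixedPointMap γ (negInv Y) F X)

/-- The value `F(X, -1/s)` at the solution `s` of the fixed-point equation. -/
noncomputable def solvedValue (γ : ℝ) (F : ℂ → ℂ → ℂ) (X Y : ℂ) : ℂ :=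
  F X (negInv (solution γ F X Y))

/-- The coefficient `-1/(γ Y - 1/F(X, -1/s))` of the last variable after one more step of the
recursion, `s` being the solution of the fixed-point equation. -/
noncomputable def schurStep (γ : ℝ) (F : ℂ → ℂ → ℂ) (X Y : ℂ) : ℂ :=
  negInv (γ * Y + negInv (solvedValue γ F X Y))

section SchurStep

variable {γ : ℝ} {F : ℂ → ℂ → ℂ} {X Y : ℂ}

lemma negInv_im_nonneg {s : ℂ} (hs : 0 ≤ s.im) : 0 ≤ (negInv s).im := by
  rw [negInv_im]
  positivity

lemma negInv_ne_zero {s : ℂ} (hs : s ≠ 0) : negInv s ≠ 0 := neg_ne_zero.2 (inv_ne_zero hs)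

lemma IsAdmissible.solution_spec (hF : IsAdmissible F) (hγ : 0 < γ) (hX : 0 < X.im)
    (hY : 0 ≤ Y.im) (hY0 : Y ≠ 0) : 0 < (solution γ F X Y).im ∧
      fixedPointMap γ (negInv Y) F X (solution γ F X Y) = solution γ F X Y :=
  upperFixedPoint_spec
    (hF.exists_fixedPoint hγ hX (negInv_im_nonneg hY) (negInv_ne_zero hY0))

lemma IsAdmissible.solution_im_pos (hF : IsAdmissible F) (hγ : 0 < γ) (hX : 0 < X.im)
    (hY : 0 < Y.im) : 0 < (solution γ F X Y).im :=
  (hF.solution_spec hγ hX hY.le (ne_zero_of_im_pos hY)).1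

lemma IsAdmissible.solution_eq (hF : IsAdmissible F) (hγ : 0 < γ) (hX : 0 < X.im)
    (hY : 0 < Y.im) : solution γ F X Y = negInv Y + γ * solvedValue γ F X Y :=
  (hF.solution_spec hγ hX hY.le (ne_zero_of_im_pos hY)).2.symm

/-- Were `hypGap s s'` larger than `k`, the equation itself would bring the two solutions closer
together than `hypGap s s'`. -/
lemma IsAdmissible.isHypNonexpansive₂_solution (hF : IsAdmissible F) (hγ : 0 < γ) :
    IsHypNonexpansive₂ (solution γ F) := by
  refine ⟨hF.solution_im_pos hγ, fun {k x y x' y'} hx hy hx' hy' hxx' hyy' => ?_⟩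
  obtain ⟨hs, hfix⟩ := hF.solution_spec hγ hx hy.le (ne_zero_of_im_pos hy)
  obtain ⟨hs', hfix'⟩ := hF.solution_spec hγ hx' hy'.le (ne_zero_of_im_pos hy')
  set s := solution γ F x y
  set s' := solution γ F x' y'
  rw [hypClose_iff hs hs']
  by_contra! hlt
  have hFs := hF.im_pos hx (negInv_im_pos hs)
  have hFs' := hF.im_pos hx' (negInv_im_pos hs')
  have hgap := hypGap_nonneg hs hs'
  have hvalue : HypClose (hypGap s s') (γ * F x (negInv s)) (γ * F x' (negInv s')) :=
    (hF.hypClose hx (negInv_im_pos hs) hx' (negInv_im_pos hs')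
      (hxx'.strict_of_lt hx hx' hlt).hypClose ((hypClose_hypGap hs hs').negInv hs hs')).real_mul γ
  have hcloser : HypStrictClose (hypGap s s') (fixedPointMap γ (negInv y) F x s)
      (fixedPointMap γ (negInv y') F x' s') :=
    ((hyy'.negInv hy hy').strict_of_lt (negInv_im_pos hy) (negInv_im_pos hy') hlt).add hgap
      (negInv_im_pos hy).le (negInv_im_pos hy').le (by simpa using (mul_pos hγ hFs).le)
      (by simpa using (mul_pos hγ hFs').le) hvalue
  rw [hfix, hfix', hypStrictClose_iff hs hs'] at hcloser
  exact lt_irrefl _ hcloser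

lemma IsAdmissible.isHypNonexpansive₂_negInv_solution (hF : IsAdmissible F) (hγ : 0 < γ) :
    IsHypNonexpansive₂ fun x y => negInv (solution γ F x y) := by
  have hS := hF.isHypNonexpansive₂_solution hγ
  exact ⟨fun hx hy => negInv_im_pos (hS.im_pos hx hy), fun hx hy hx' hy' hxx' hyy' =>
    (hS.hypClose hx hy hx' hy' hxx' hyy').negInv (hS.im_pos hx hy) (hS.im_pos hx' hy')⟩

lemma IsAdmissible.isHypNonexpansive₂_solvedValue (hF : IsAdmissible F) (hγ : 0 < γ) :
    IsHypNonexpansive₂ (solvedValue γ F) := by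
  have hS := hF.isHypNonexpansive₂_negInv_solution hγ
  exact ⟨fun hx hy => hF.im_pos hx (hS.im_pos hx hy), fun hx hy hx' hy' hxx' hyy' =>
    hF.hypClose hx (hS.im_pos hx hy) hx' (hS.im_pos hx' hy') hxx'
      (hS.hypClose hx hy hx' hy' hxx' hyy')⟩

lemma le_im_mul_add_negInv {T : ℂ} (hT : 0 < T.im) : γ * Y.im ≤ (γ * Y + negInv T).im := by
  simpa using (negInv_im_pos hT).le

lemma IsAdmissible.im_mul_add_negInv_solvedValue_pos (hF : IsAdmissible F) (hγ : 0 < γ)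
    (hX : 0 < X.im) (hY : 0 < Y.im) : 0 < (γ * Y + negInv (solvedValue γ F X Y)).im :=
  (mul_pos hγ hY).trans_le
    (le_im_mul_add_negInv ((hF.isHypNonexpansive₂_solvedValue hγ).im_pos hX hY))

lemma IsAdmissible.isHypNonexpansive₂_schurStep (hF : IsAdmissible F) (hγ : 0 < γ) :
    IsHypNonexpansive₂ (schurStep γ F) := by
  have hT := hF.isHypNonexpansive₂_solvedValue hγ
  have hden := @IsAdmissible.im_mul_add_negInv_solvedValue_pos γ F
  refine ⟨fun hx hy => negInv_im_pos (hden hF hγ hx hy),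
    fun {k x y x' y'} hx hy hx' hy' hxx' hyy' => ?_⟩
  refine HypClose.negInv ?_ (hden hF hγ hx hy) (hden hF hγ hx' hy')
  have hTx := hT.im_pos hx hy
  have hTx' := hT.im_pos hx' hy'
  exact (hyy'.real_mul γ).add (hyy'.nonneg hy hy') (by simpa using (mul_pos hγ hy).le)
    (by simpa using (mul_pos hγ hy').le) (negInv_im_pos hTx).le (negInv_im_pos hTx').le
    ((hT.hypClose hx hy hx' hy' hxx' hyy').negInv hTx hTx')

lemma IsAdmissible.schurStep_strict (hF : IsAdmissible F) (hγ : 0 < γ) {k : ℝ}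
    {x y x' y' : ℂ} (hx : 0 < x.im) (hy : 0 < y.im) (hx' : 0 < x'.im) (hy' : 0 < y'.im)
    (hxx' : HypStrictClose k x x') (hyy' : HypClose k y y') :
    HypStrictClose k (schurStep γ F x y) (schurStep γ F x' y') := by
  have hv := hF.isHypNonexpansive₂_negInv_solution hγ
  have hT := hF.isHypNonexpansive₂_solvedValue hγ
  have hTx := hT.im_pos hx hy
  have hTx' := hT.im_pos hx' hy'
  have hvalue : HypStrictClose k (solvedValue γ F x y) (solvedValue γ F x' y') :=
    hF.strict hx (hv.im_pos hx hy) hx' (hv.im_pos hx' hy') hxx'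
      (hv.hypClose hx hy hx' hy' hxx'.hypClose hyy')
  refine HypStrictClose.negInv ?_ (hF.im_mul_add_negInv_solvedValue_pos hγ hx hy)
    (hF.im_mul_add_negInv_solvedValue_pos hγ hx' hy')
  exact (hyy'.real_mul γ).add_strict (hyy'.nonneg hy hy') (by simpa using (mul_pos hγ hy).le)
    (by simpa using (mul_pos hγ hy').le) (negInv_im_pos hTx).le (negInv_im_pos hTx').le
    (hvalue.negInv hTx hTx')

lemma IsAdmissible.norm_schurStep_le (hF : IsAdmissible F) (hγ : 0 < γ) (hX : 0 < X.im)
    (hY : 0 < Y.im) : ‖schurStep γ F X Y‖ ≤ 1 / γ / Y.im := by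
  rw [div_div]
  exact norm_negInv_le (mul_pos hγ hY)
    (le_im_mul_add_negInv ((hF.isHypNonexpansive₂_solvedValue hγ).im_pos hX hY))

lemma mul_add_negInv_eq {s y T : ℂ} (hy : y ≠ 0) (hT : T ≠ 0) (hs : s = negInv y + γ * T) :
    γ * y + negInv T = y * s / T := by
  rw [hs]
  unfold negInv
  field_simp
  ring

section AtNonzeroBoundaryPoint

variable {c M : ℝ}

instance : (nontangential X c M).IsCountablyGenerated := by
  unfold nontangential
  infer_instance

lemma IsAdmissible.exists_tendsto_schurStep (hF : IsAdmissible F) (hγ : 0 < γ) (hX : 0 < X.im)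
    (hc : c ≠ 0) : ∃ B : ℂ, 0 < B.im ∧
      Tendsto (fun p : ℂ × ℂ => schurStep γ F p.1 p.2) (nontangential X c M) (𝓝 B) := by
  have hc0 : (c : ℂ) ≠ 0 := by exact_mod_cast hc
  have hcim : 0 ≤ (c : ℂ).im := by simp
  obtain ⟨hS, hSfix⟩ := hF.solution_spec hγ hX hcim hc0
  have hpos := eventually_nontangential (X := X) (c := c) (M := M)
  have hsol : Tendsto (fun p : ℂ × ℂ => solution γ F p.1 p.2) (nontangential X c M)
      (𝓝 (solution γ F X c)) :=
    hF.tendsto_fixedPoint hγ hX (negInv_im_nonneg hcim) (negInv_ne_zero hc0)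
      tendsto_fst_nontangential (tendsto_negInv tendsto_snd_nontangential hc0)
      (hpos.mono fun p hp => (negInv_im_pos hp.2.1).le)
      (hpos.mono fun p hp => hF.solution_im_pos hγ hp.1 hp.2.1)
      (hpos.mono fun p hp => (hF.solution_spec hγ hp.1 hp.2.1.le (ne_zero_of_im_pos hp.2.1)).2)
      hS hSfix
  have hT : 0 < (solvedValue γ F X c).im := hF.im_pos hX (negInv_im_pos hS)
  have hvalue : Tendsto (fun p : ℂ × ℂ => solvedValue γ F p.1 p.2) (nontangential X c M)
      (𝓝 (solvedValue γ F X c)) :=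
    hF.toIsHypNonexpansive₂.tendsto hX (negInv_im_pos hS) tendsto_fst_nontangential
      (tendsto_negInv hsol (ne_zero_of_im_pos hS))
  have hden : 0 < (γ * (c : ℂ) + negInv (solvedValue γ F X c)).im := by
    simpa using negInv_im_pos hT
  exact ⟨schurStep γ F X c, negInv_im_pos hden,
    tendsto_negInv ((tendsto_snd_nontangential.const_mul _).add
      (tendsto_negInv hvalue (ne_zero_of_im_pos hT))) (ne_zero_of_im_pos hden)⟩

end AtNonzeroBoundaryPoint

section AtZero

/-! As `Y → 0` nontangentially, `-1/Y` dominates the equation `s = -1/Y + γ F(X, -1/s)`, so `s` is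
a small hyperbolic perturbation of `-1/Y` and `F(X, -1/s)` one of `F(X, Y)`. -/

lemma norm_le_two_mul_norm_of_hypClose {s a T P : ℂ} (ha : 0 < a.im) (hT : 0 < T.im)
    (hP : 0 < P.im) (hγ : 0 < γ) (hs : s = a + γ * T) (h : HypClose (hypGap s a) T P)
    (hsmall : γ * P.im ≤ 1 / 4 * a.im) : ‖T‖ ≤ 2 * ‖P‖ := by
  have hsim : s.im = a.im + γ * T.im := by simp [hs]
  have hspos : 0 < s.im := by rw [hsim]; positivity
  have hnorm : ‖s - a‖ = γ * ‖T‖ := by simp [hs, abs_of_pos hγ]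
  have hTs : γ * T.im / s.im ≤ 1 := by
    rw [div_le_one hspos]
    linarith
  have hPa : γ * P.im / a.im ≤ 1 / 4 := by rwa [div_le_iff₀ ha]
  have hsq : ‖T - P‖ ^ 2 ≤ (‖T‖ / 2) ^ 2 :=
    calc ‖T - P‖ ^ 2 ≤ (γ * ‖T‖) ^ 2 / (s.im * a.im) * (T.im * P.im) := by rwa [← hnorm]
      _ = ‖T‖ ^ 2 * ((γ * T.im / s.im) * (γ * P.im / a.im)) := by field_simp
      _ ≤ ‖T‖ ^ 2 * (1 * (1 / 4)) := by gcongr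
      _ = (‖T‖ / 2) ^ 2 := by ring
  have hdist : ‖T - P‖ ≤ ‖T‖ / 2 := le_of_sq_le_sq hsq (by positivity)
  have htri : ‖T‖ ≤ ‖T - P‖ + ‖P‖ := by simpa using norm_add_le (T - P) P
  linarith

lemma im_le_four_mul_im_of_hypClose {s a T P : ℂ} (ha : 0 < a.im) (hT : 0 < T.im)
    (hP : 0 < P.im) (hγ : 0 < γ) (hs : s = a + γ * T) (h : HypClose (hypGap s a) T P)
    (hsmall : γ * ‖T‖ ≤ 1 / 2 * a.im) : P.im ≤ 4 * T.im := by
  have hsim : s.im = a.im + γ * T.im := by simp [hs]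
  have hle : a.im ≤ s.im := by
    rw [hsim]
    have := mul_pos hγ hT
    linarith
  have hnorm : ‖s - a‖ = γ * ‖T‖ := by simp [hs, abs_of_pos hγ]
  have hgap : hypGap s a ≤ 1 / 4 := by
    rw [hypGap, div_le_iff₀ (mul_pos (ha.trans_le hle) ha), hnorm]
    calc (γ * ‖T‖) ^ 2 ≤ (1 / 2 * a.im) ^ 2 := by gcongr
      _ = 1 / 4 * (a.im * a.im) := by ring
      _ ≤ 1 / 4 * (s.im * a.im) := by gcongr
  exact HypClose.im_le_four_mul ((hypClose_iff hT hP).2 (((hypClose_iff hT hP).1 h).trans hgap))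
    hT hP

variable {M : ℝ}

lemma one_le_mul_negInv_im {y : ℂ} (hy : 0 < y.im) (hcone : ‖y‖ ≤ M * y.im) :
    1 ≤ M * ‖y‖ * (negInv y).im := by
  have hnorm := norm_pos_of_im_pos hy
  calc 1 ≤ M * y.im / ‖y‖ := (one_le_div hnorm).2 hcone
    _ = M * ‖y‖ * (negInv y).im := by
      rw [negInv_im]
      field_simp

lemma eventually_norm_le_mul_negInv_im {G : ℂ × ℂ → ℂ}
    (hG : Tendsto (fun p : ℂ × ℂ => p.2 * G p) (nontangential X 0 M) (𝓝 0)) {δ : ℝ}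
    (hδ : 0 < δ) : ∀ᶠ p in nontangential X 0 M, ‖G p‖ ≤ δ * (negInv p.2).im := by
  have hsmall : Tendsto (fun p : ℂ × ℂ => M * ‖p.2 * G p‖) (nontangential X 0 M) (𝓝 0) := by
    simpa using hG.norm.const_mul M
  filter_upwards [eventually_nontangential, hsmall.eventually_le_const hδ]
    with p ⟨_, hy, hcone⟩ hle
  have hone := one_le_mul_negInv_im (M := M) hy (by simpa using hcone)
  have := negInv_im_pos hy
  calc ‖G p‖ ≤ ‖G p‖ * (M * ‖p.2‖ * (negInv p.2).im) :=
        le_mul_of_one_le_right (norm_nonneg _) hone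
    _ = M * ‖p.2 * G p‖ * (negInv p.2).im := by
      rw [norm_mul]
      ring
    _ ≤ δ * (negInv p.2).im := by gcongr

lemma IsAdmissible.hypClose_solvedValue (hF : IsAdmissible F) (hγ : 0 < γ) (hX : 0 < X.im)
    (hY : 0 < Y.im) :
    HypClose (hypGap (solution γ F X Y) (negInv Y)) (solvedValue γ F X Y) (F X Y) := by
  have hs := hF.solution_im_pos hγ hX hY
  have ha := negInv_im_pos hY
  have := hF.hypClose hX (negInv_im_pos hs) hX (negInv_im_pos ha) (.refl (hypGap_nonneg hs ha) X)
    ((hypClose_hypGap hs ha).negInv hs ha)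
  rwa [negInv_negInv] at this

lemma IsAdmissible.tendsto_mul_solvedValue (hF : IsAdmissible F) (hγ : 0 < γ) (hX : 0 < X.im) :
    Tendsto (fun p : ℂ × ℂ => p.2 * (γ * solvedValue γ F p.1 p.2)) (nontangential X 0 M)
      (𝓝 0) := by
  have hyP : Tendsto (fun p : ℂ × ℂ => p.2 * (γ * F p.1 p.2)) (nontangential X 0 M) (𝓝 0) := by
    simpa [mul_left_comm] using (hF.tendsto_sub_mul hX (c := 0)).const_mul (γ : ℂ)
  have hbound : Tendsto (fun p : ℂ × ℂ => 2 * ‖p.2 * (γ * F p.1 p.2)‖) (nontangential X 0 M)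
      (𝓝 0) := by simpa using hyP.norm.const_mul 2
  rw [tendsto_zero_iff_norm_tendsto_zero]
  refine squeeze_zero' (.of_forall fun p => norm_nonneg _) ?_ hbound
  filter_upwards [eventually_nontangential,
    eventually_norm_le_mul_negInv_im hyP (δ := 1 / 4) (by norm_num)] with p ⟨hx, hy, _⟩ hsmall
  have hle : ‖solvedValue γ F p.1 p.2‖ ≤ 2 * ‖F p.1 p.2‖ := by
    refine norm_le_two_mul_norm_of_hypClose (negInv_im_pos hy)
      ((hF.isHypNonexpansive₂_solvedValue hγ).im_pos hx hy) (hF.im_pos hx hy) hγ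
      (hF.solution_eq hγ hx hy) (hF.hypClose_solvedValue hγ hx hy) (le_trans ?_ hsmall)
    simpa using Complex.im_le_norm ((γ : ℂ) * F p.1 p.2)
  calc ‖p.2 * (γ * solvedValue γ F p.1 p.2)‖
      = ‖p.2‖ * (‖(γ : ℂ)‖ * ‖solvedValue γ F p.1 p.2‖) := by rw [norm_mul, norm_mul]
    _ ≤ ‖p.2‖ * (‖(γ : ℂ)‖ * (2 * ‖F p.1 p.2‖)) := by gcongr
    _ = 2 * ‖p.2 * (γ * F p.1 p.2)‖ := by
      rw [norm_mul, norm_mul]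
      ring

lemma IsAdmissible.tendsto_mul_solution (hF : IsAdmissible F) (hγ : 0 < γ) (hX : 0 < X.im) :
    Tendsto (fun p : ℂ × ℂ => p.2 * solution γ F p.1 p.2) (nontangential X 0 M) (𝓝 (-1)) := by
  have hlim := (hF.tendsto_mul_solvedValue (M := M) hγ hX).const_add (-1)
  rw [add_zero] at hlim
  refine hlim.congr' ?_
  filter_upwards [eventually_nontangential] with p ⟨hx, hy, _⟩
  have := ne_zero_of_im_pos hy
  rw [hF.solution_eq hγ hx hy, negInv]
  field_simp

lemma IsAdmissible.schurStep_eq (hF : IsAdmissible F) (hγ : 0 < γ) (hX : 0 < X.im)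
    (hY : 0 < Y.im) : schurStep γ F X Y = -(solvedValue γ F X Y / (Y * solution γ F X Y)) := by
  rw [schurStep, mul_add_negInv_eq (ne_zero_of_im_pos hY)
    (ne_zero_of_im_pos ((hF.isHypNonexpansive₂_solvedValue hγ).im_pos hX hY))
    (hF.solution_eq hγ hX hY), negInv, inv_div]

lemma IsAdmissible.tendsto_mul_schurStep (hF : IsAdmissible F) (hγ : 0 < γ) (hX : 0 < X.im) :
    Tendsto (fun p : ℂ × ℂ => p.2 * schurStep γ F p.1 p.2) (nontangential X 0 M) (𝓝 0) := by
  have hquot := ((hF.tendsto_mul_solvedValue (M := M) hγ hX).div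
    (hF.tendsto_mul_solution hγ hX) (by norm_num)).const_mul (-(γ : ℂ)⁻¹)
  rw [zero_div, mul_zero] at hquot
  refine hquot.congr' ?_
  filter_upwards [eventually_nontangential] with p ⟨hx, hy, _⟩
  have hγ0 : (γ : ℂ) ≠ 0 := by exact_mod_cast hγ.ne'
  rw [hF.schurStep_eq hγ hx hy, Pi.div_apply]
  field_simp

lemma IsAdmissible.im_div_le_im_schurStep (hF : IsAdmissible F) (hγ : 0 < γ) (hX : 0 < X.im)
    (hY : 0 < Y.im) : (solvedValue γ F X Y).im / ‖Y * solution γ F X Y‖ ^ 2 ≤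
      (schurStep γ F X Y).im := by
  have hT := (hF.isHypNonexpansive₂_solvedValue hγ).im_pos hX hY
  have hTnorm := norm_pos_of_im_pos hT
  have him : (negInv (solvedValue γ F X Y)).im ≤ (γ * Y + negInv (solvedValue γ F X Y)).im := by
    simpa using (mul_pos hγ hY).le
  have hform := mul_add_negInv_eq (ne_zero_of_im_pos hY) (ne_zero_of_im_pos hT)
    (hF.solution_eq hγ hX hY)
  rw [negInv_im] at him
  calc (solvedValue γ F X Y).im / ‖Y * solution γ F X Y‖ ^ 2
      = (solvedValue γ F X Y).im / ‖solvedValue γ F X Y‖ ^ 2 /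
          ‖γ * Y + negInv (solvedValue γ F X Y)‖ ^ 2 := by
        rw [hform, norm_div]
        field_simp
    _ ≤ (γ * Y + negInv (solvedValue γ F X Y)).im /
          ‖γ * Y + negInv (solvedValue γ F X Y)‖ ^ 2 := by gcongr
    _ = (schurStep γ F X Y).im := (negInv_im _).symm

lemma IsAdmissible.exists_le_im_schurStep_zero (hF : IsAdmissible F) (hγ : 0 < γ)
    (hX : 0 < X.im) : ∃ κ : ℝ, 0 < κ ∧
      ∀ᶠ p : ℂ × ℂ in nontangential X 0 M, κ ≤ (schurStep γ F p.1 p.2).im := by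
  obtain ⟨κ, hκ, hκle⟩ := hF.exists_le_im hX (c := 0) (M := M)
  have hnorm : Tendsto (fun p : ℂ × ℂ => ‖p.2 * solution γ F p.1 p.2‖) (nontangential X 0 M)
      (𝓝 1) := by simpa using (hF.tendsto_mul_solution hγ hX).norm
  refine ⟨κ / 16, by positivity, ?_⟩
  filter_upwards [eventually_nontangential, hκle, hnorm.eventually_le_const one_lt_two,
    hnorm.eventually_const_lt one_pos,
    eventually_norm_le_mul_negInv_im (hF.tendsto_mul_solvedValue hγ hX) (δ := 1 / 2)
      (by norm_num)] with p ⟨hx, hy, _⟩ hκp htwo hpos hsmall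
  have hPT : (F p.1 p.2).im ≤ 4 * (solvedValue γ F p.1 p.2).im :=
    im_le_four_mul_im_of_hypClose (negInv_im_pos hy)
      ((hF.isHypNonexpansive₂_solvedValue hγ).im_pos hx hy) (hF.im_pos hx hy) hγ
      (hF.solution_eq hγ hx hy) (hF.hypClose_solvedValue hγ hx hy)
      (by simpa [abs_of_pos hγ] using hsmall)
  calc κ / 16 = κ / 4 / 2 ^ 2 := by ring
    _ ≤ (solvedValue γ F p.1 p.2).im / ‖p.2 * solution γ F p.1 p.2‖ ^ 2 := by
      gcongr <;> linarith
    _ ≤ (schurStep γ F p.1 p.2).im := hF.im_div_le_im_schurStep hγ hx hy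

end AtZero

theorem IsAdmissible.schurStep (hF : IsAdmissible F) (hγ : 0 < γ) :
    IsAdmissible (schurStep γ F) where
  toIsHypNonexpansive₂ := hF.isHypNonexpansive₂_schurStep hγ
  strict := hF.schurStep_strict hγ
  exists_norm_le := ⟨1 / γ, hF.norm_schurStep_le hγ⟩
  tendsto_sub_mul {X c M} hX := by
    rcases eq_or_ne c 0 with rfl | hc
    · simpa using hF.tendsto_mul_schurStep hγ hX
    · obtain ⟨B, -, hB⟩ := hF.exists_tendsto_schurStep (M := M) hγ hX hc
      simpa using (tendsto_snd_nontangential.sub_const (c : ℂ)).mul hB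
  exists_le_im {X c M} hX := by
    rcases eq_or_ne c 0 with rfl | hc
    · exact hF.exists_le_im_schurStep_zero hγ hX
    · obtain ⟨B, hBpos, hB⟩ := hF.exists_tendsto_schurStep (M := M) hγ hX hc
      exact ⟨B.im / 2, by positivity,
        (tendsto_im hB).eventually_const_le (half_lt_self hBpos)⟩

end SchurStep

/-- What the recursion needs of the coefficient of the first variable in `t_ℓ(z, ·)`, as a function
of the negated first and last entries of `z`. -/
structure IsFirstCoefficient (A : ℂ → ℂ → ℂ) : Prop extends IsHypNonexpansive₂ A where
  norm_le : ∀ {x y : ℂ}, 0 < x.im → 0 < y.im → ‖A x y‖ ≤ 1 / x.im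

/-- The value `t_ℓ(z_prev, (1 - b², 0, …, 0, b²))` as a function of `X = -z₋₁` and `v = -1/s`, where
`A` and `B` are the first and last coefficients of `t_ℓ`, `α = 1 - b²`, `β = b²`, and `-c` is the
last entry of `z` before the shift by `b²/s`. -/
noncomputable def levelMap (α β c : ℝ) (A B : ℂ → ℂ → ℂ) (X v : ℂ) : ℂ :=
  α * A (X + α * v) (c + β * v) + β * B (X + α * v) (c + β * v)

section LevelMap

variable {α β c : ℝ} {A B V : ℂ → ℂ → ℂ} {X v : ℂ}

lemma im_add_mul_pos (hα : 0 ≤ α) (hX : 0 < X.im) (hv : 0 < v.im) : 0 < (X + α * v).im := by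
  simp only [Complex.add_im, Complex.im_ofReal_mul]
  positivity

lemma im_ofReal_add_mul_pos (hβ : 0 < β) (hv : 0 < v.im) : 0 < ((c : ℂ) + β * v).im := by
  simpa using mul_pos hβ hv

lemma im_ofReal_mul_nonneg (hα : 0 ≤ α) (hv : 0 < v.im) : 0 ≤ ((α : ℂ) * v).im := by
  simpa using mul_nonneg hα hv.le

lemma HypClose.add_mul {k : ℝ} {x x' v v' : ℂ} (h : HypClose k x x') (hα : 0 ≤ α)
    (hx : 0 < x.im) (hx' : 0 < x'.im) (hv : 0 < v.im) (hv' : 0 < v'.im) (hvv' : HypClose k v v') :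
    HypClose k (x + α * v) (x' + α * v') :=
  h.add (h.nonneg hx hx') hx.le hx'.le (im_ofReal_mul_nonneg hα hv) (im_ofReal_mul_nonneg hα hv')
    (hvv'.real_mul α)

lemma HypStrictClose.add_mul {k : ℝ} {x x' v v' : ℂ} (h : HypStrictClose k x x') (hα : 0 ≤ α)
    (hx : 0 < x.im) (hx' : 0 < x'.im) (hv : 0 < v.im) (hv' : 0 < v'.im) (hvv' : HypClose k v v') :
    HypStrictClose k (x + α * v) (x' + α * v') :=
  h.add (hvv'.nonneg hv hv') hx.le hx'.le (im_ofReal_mul_nonneg hα hv)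
    (im_ofReal_mul_nonneg hα hv') (hvv'.real_mul α)

lemma isHypNonexpansive₂_snd : IsHypNonexpansive₂ fun _ v => v :=
  ⟨fun _ hv => hv, fun _ _ _ _ _ h => h⟩

lemma IsHypNonexpansive₂.comp_affine (hA : IsHypNonexpansive₂ A) (hα : 0 ≤ α) (hβ : 0 < β)
    (hV : IsHypNonexpansive₂ V) :
    IsHypNonexpansive₂ fun X Y => A (X + α * V X Y) (c + β * V X Y) := by
  refine ⟨fun hx hy => ?_, fun {k x y x' y'} hx hy hx' hy' hxx' hyy' => ?_⟩
  · have hv := hV.im_pos hx hy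
    exact hA.im_pos (im_add_mul_pos hα hx hv) (im_ofReal_add_mul_pos hβ hv)
  · have hv := hV.im_pos hx hy
    have hv' := hV.im_pos hx' hy'
    have hvv' := hV.hypClose hx hy hx' hy' hxx' hyy'
    exact hA.hypClose (im_add_mul_pos hα hx hv) (im_ofReal_add_mul_pos hβ hv)
      (im_add_mul_pos hα hx' hv') (im_ofReal_add_mul_pos hβ hv')
      (hxx'.add_mul hα hx hx' hv hv' hvv') ((hvv'.real_mul β).real_add c)

lemma IsFirstCoefficient.comp_affine (hA : IsFirstCoefficient A) (hα : 0 ≤ α) (hβ : 0 < β)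
    (hV : IsHypNonexpansive₂ V) :
    IsFirstCoefficient fun X Y => A (X + α * V X Y) (c + β * V X Y) where
  toIsHypNonexpansive₂ := hA.toIsHypNonexpansive₂.comp_affine hα hβ hV
  norm_le {x y} hx hy := by
    have hv := hV.im_pos hx hy
    refine (hA.norm_le (im_add_mul_pos hα hx hv) (im_ofReal_add_mul_pos hβ hv)).trans ?_
    refine one_div_le_one_div_of_le hx ?_
    simpa using mul_nonneg hα hv.le

lemma IsHypNonexpansive₂.levelMap_im_pos (hA : IsHypNonexpansive₂ A) (hB : IsHypNonexpansive₂ B)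
    (hα : 0 ≤ α) (hβ : 0 < β) (hX : 0 < X.im) (hv : 0 < v.im) :
    0 < (levelMap α β c A B X v).im := by
  have hAim := (hA.comp_affine (c := c) hα hβ isHypNonexpansive₂_snd).im_pos hX hv
  have hBim := (hB.comp_affine (c := c) hα hβ isHypNonexpansive₂_snd).im_pos hX hv
  simp only [levelMap, Complex.add_im, Complex.im_ofReal_mul]
  positivity

lemma IsHypNonexpansive₂.levelMap (hA : IsHypNonexpansive₂ A) (hB : IsHypNonexpansive₂ B)
    (hα : 0 ≤ α) (hβ : 0 < β) : IsHypNonexpansive₂ (levelMap α β c A B) := by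
  have hA' := hA.comp_affine (c := c) hα hβ isHypNonexpansive₂_snd
  have hB' := hB.comp_affine (c := c) hα hβ isHypNonexpansive₂_snd
  refine ⟨hA.levelMap_im_pos hB hα hβ, fun {k x y x' y'} hx hy hx' hy' hxx' hyy' => ?_⟩
  exact ((hA'.hypClose hx hy hx' hy' hxx' hyy').real_mul α).add (hyy'.nonneg hy hy')
    (im_ofReal_mul_nonneg hα (hA'.im_pos hx hy)) (im_ofReal_mul_nonneg hα (hA'.im_pos hx' hy'))
    (im_ofReal_mul_nonneg hβ.le (hB'.im_pos hx hy))
    (im_ofReal_mul_nonneg hβ.le (hB'.im_pos hx' hy'))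
    ((hB'.hypClose hx hy hx' hy' hxx' hyy').real_mul β)

lemma IsAdmissible.levelMap_strict (hB : IsAdmissible B) (hA : IsHypNonexpansive₂ A)
    (hα : 0 ≤ α) (hβ : 0 < β) {k : ℝ} {x y x' y' : ℂ} (hx : 0 < x.im) (hy : 0 < y.im)
    (hx' : 0 < x'.im) (hy' : 0 < y'.im) (hxx' : HypStrictClose k x x') (hyy' : HypClose k y y') :
    HypStrictClose k (levelMap α β c A B x y) (levelMap α β c A B x' y') := by
  have hA' := hA.comp_affine (c := c) hα hβ isHypNonexpansive₂_snd
  have hB' := hB.toIsHypNonexpansive₂.comp_affine (c := c) hα hβ isHypNonexpansive₂_snd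
  have hstrict := hB.strict (im_add_mul_pos hα hx hy) (im_ofReal_add_mul_pos (c := c) hβ hy)
    (im_add_mul_pos hα hx' hy') (im_ofReal_add_mul_pos hβ hy')
    (hxx'.add_mul hα hx hx' hy hy' hyy') ((hyy'.real_mul β).real_add c)
  exact ((hA'.hypClose hx hy hx' hy' hxx'.hypClose hyy').real_mul α).add_strict
    (hyy'.nonneg hy hy')
    (im_ofReal_mul_nonneg hα (hA'.im_pos hx hy)) (im_ofReal_mul_nonneg hα (hA'.im_pos hx' hy'))
    (im_ofReal_mul_nonneg hβ.le (hB'.im_pos hx hy))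
    (im_ofReal_mul_nonneg hβ.le (hB'.im_pos hx' hy')) (hstrict.real_mul hβ.ne')

lemma IsFirstCoefficient.norm_mul_le (hA : IsFirstCoefficient A) (hα : 0 ≤ α) (hβ : 0 < β)
    (hX : 0 < X.im) (hv : 0 < v.im) : ‖α * A (X + α * v) (c + β * v)‖ ≤ 1 / v.im := by
  have hle := hA.norm_le (im_add_mul_pos hα hX hv) (im_ofReal_add_mul_pos (c := c) hβ hv)
  have him : (X + α * v).im = X.im + α * v.im := by simp
  have hden : 0 < X.im + α * v.im := by positivity
  rw [him] at hle
  rw [norm_mul, Complex.norm_real, Real.norm_of_nonneg hα]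
  calc α * ‖A (X + α * v) (c + β * v)‖ ≤ α * (1 / (X.im + α * v.im)) := by gcongr
    _ ≤ 1 / v.im := by
      rw [mul_one_div, div_le_div_iff₀ hden hv]
      linarith

lemma IsAdmissible.exists_norm_levelMap_le (hB : IsAdmissible B) (hA : IsFirstCoefficient A)
    (hα : 0 ≤ α) (hβ : 0 < β) : ∃ C : ℝ, ∀ {X v : ℂ}, 0 < X.im → 0 < v.im →
      ‖levelMap α β c A B X v‖ ≤ C / v.im := by
  obtain ⟨C, hC⟩ := hB.exists_norm_le
  refine ⟨1 + C, fun {X v} hX hv => ?_⟩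
  have hBle := hC (im_add_mul_pos hα hX hv) (im_ofReal_add_mul_pos (c := c) hβ hv)
  have him : ((c : ℂ) + β * v).im = β * v.im := by simp
  calc ‖levelMap α β c A B X v‖
      ≤ ‖α * A (X + α * v) (c + β * v)‖ + ‖β * B (X + α * v) (c + β * v)‖ := norm_add_le _ _
    _ ≤ 1 / v.im + β * (C / (β * v.im)) := by
      rw [norm_mul (β : ℂ), Complex.norm_real, Real.norm_of_nonneg hβ.le, ← him]
      gcongr
      exact hA.norm_mul_le hα hβ hX hv
    _ = (1 + C) / v.im := by
      field_simp

lemma tendsto_affine_nontangential (hβ : 0 < β) (hX : 0 < X.im) {c' M : ℝ} :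
    Tendsto (fun p : ℂ × ℂ => (p.1 + α * p.2, (c : ℂ) + β * p.2)) (nontangential X c' M)
      (nontangential (X + α * c') (c + β * c') M) := by
  have hpos := eventually_nontangential (X := X) (c := c') (M := M)
  refine tendsto_nontangential (by simpa using hX)
    (tendsto_fst_nontangential.add (tendsto_snd_nontangential.const_mul _)) ?_
    (hpos.mono fun p hp => im_ofReal_add_mul_pos hβ hp.2.1) (hpos.mono fun p hp => ?_)
  · push_cast
    exact (tendsto_snd_nontangential.const_mul _).const_add _
  · have hsub : (c : ℂ) + β * p.2 - ((c + β * c' : ℝ) : ℂ) = β * (p.2 - c') := by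
      push_cast
      ring
    rw [hsub, norm_mul, Complex.norm_real, Real.norm_of_nonneg hβ.le]
    calc β * ‖p.2 - c'‖ ≤ β * (M * p.2.im) := mul_le_mul_of_nonneg_left hp.2.2 hβ.le
      _ = M * ((c : ℂ) + β * p.2).im := by
        simp only [Complex.add_im, Complex.ofReal_im, Complex.im_ofReal_mul]
        ring

lemma IsFirstCoefficient.tendsto_sub_mul (hA : IsFirstCoefficient A) (hα : 0 ≤ α) (hβ : 0 < β)
    (hX : 0 < X.im) {c' M : ℝ} :
    Tendsto (fun p : ℂ × ℂ => (p.2 - c') * A (p.1 + α * p.2) (c + β * p.2))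
      (nontangential X c' M) (𝓝 0) := by
  have hbound : Tendsto (fun p : ℂ × ℂ => ‖p.2 - c'‖ * (1 / p.1.im)) (nontangential X c' M)
      (𝓝 0) := by
    simpa using ((tendsto_snd_nontangential (c := c') (M := M)).sub_const (c' : ℂ)).norm.mul
      ((tendsto_im tendsto_fst_nontangential).inv₀ hX.ne')
  rw [tendsto_zero_iff_norm_tendsto_zero]
  refine squeeze_zero' (.of_forall fun p => norm_nonneg _) ?_ hbound
  filter_upwards [eventually_nontangential] with p ⟨hx, hy, _⟩
  rw [norm_mul]
  gcongr
  exact (hA.comp_affine hα hβ isHypNonexpansive₂_snd).norm_le hx hy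

lemma IsAdmissible.tendsto_sub_mul_levelMap (hB : IsAdmissible B) (hA : IsFirstCoefficient A)
    (hα : 0 ≤ α) (hβ : 0 < β) (hX : 0 < X.im) {c' M : ℝ} :
    Tendsto (fun p : ℂ × ℂ => (p.2 - c') * levelMap α β c A B p.1 p.2) (nontangential X c' M)
      (𝓝 0) := by
  have hX' : 0 < (X + α * c').im := by simpa using hX
  have hlim := ((hA.tendsto_sub_mul (c := c) (c' := c') (M := M) hα hβ hX).const_mul (α : ℂ)).add
    ((hB.tendsto_sub_mul hX').comp (tendsto_affine_nontangential (c := c) hβ hX))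
  rw [mul_zero, add_zero] at hlim
  refine hlim.congr fun p => ?_
  simp only [Function.comp_apply, levelMap]
  push_cast
  ring

lemma IsAdmissible.exists_le_im_levelMap (hB : IsAdmissible B) (hA : IsHypNonexpansive₂ A)
    (hα : 0 ≤ α) (hβ : 0 < β) (hX : 0 < X.im) {c' M : ℝ} : ∃ κ : ℝ, 0 < κ ∧
      ∀ᶠ p : ℂ × ℂ in nontangential X c' M, κ ≤ (levelMap α β c A B p.1 p.2).im := by
  obtain ⟨κ, hκ, hle⟩ := hB.exists_le_im (X := X + α * c') (c := c + β * c') (M := M)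
    (by simpa using hX)
  refine ⟨β * κ, by positivity, ?_⟩
  filter_upwards [eventually_nontangential, tendsto_affine_nontangential hβ hX hle]
    with p ⟨hx, hy, _⟩ (hκp : κ ≤ (B (p.1 + α * p.2) (c + β * p.2)).im)
  have hAim := im_ofReal_mul_nonneg hα
    ((hA.comp_affine (c := c) hα hβ isHypNonexpansive₂_snd).im_pos hx hy)
  calc β * κ ≤ β * (B (p.1 + α * p.2) (c + β * p.2)).im := by gcongr
    _ ≤ (levelMap α β c A B p.1 p.2).im := by simpa [levelMap] using hAim

theorem IsAdmissible.levelMap (hB : IsAdmissible B) (hA : IsFirstCoefficient A) (hα : 0 ≤ α)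
    (hβ : 0 < β) : IsAdmissible (levelMap α β c A B) where
  toIsHypNonexpansive₂ := hA.toIsHypNonexpansive₂.levelMap hB.toIsHypNonexpansive₂ hα hβ
  strict := hB.levelMap_strict hA.toIsHypNonexpansive₂ hα hβ
  exists_norm_le := hB.exists_norm_levelMap_le hA hα hβ
  tendsto_sub_mul hX := hB.tendsto_sub_mul_levelMap hA hα hβ hX
  exists_le_im hX := hB.exists_le_im_levelMap hA.toIsHypNonexpansive₂ hα hβ hX

end LevelMap

section IntegralHypClose

variable {Ω : Type*} [MeasurableSpace Ω] {μ : Measure Ω}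

lemma integral_lt_integral_of_frequently_lt {u v : Ω → ℝ} (hu : Integrable u μ)
    (hv : Integrable v μ) (hle : ∀ᵐ x ∂μ, u x ≤ v x) (hlt : ∃ᶠ x in ae μ, u x < v x) :
    ∫ x, u x ∂μ < ∫ x, v x ∂μ := by
  rw [← sub_pos, ← integral_sub hv hu, integral_pos_iff_support_of_nonneg_ae
    (hle.mono fun x => sub_nonneg.2) (hv.sub hu), pos_iff_ne_zero, ← frequently_ae_mem_iff]
  exact hlt.mono fun x hx => (sub_pos.2 hx).ne'

lemma integral_pos_of_frequently_pos {u : Ω → ℝ} (hu : Integrable u μ) (hnonneg : ∀ᵐ x ∂μ, 0 ≤ u x)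
    (hpos : ∃ᶠ x in ae μ, 0 < u x) : 0 < ∫ x, u x ∂μ := by
  simpa using integral_lt_integral_of_frequently_lt (integrable_zero _ _ _) hu hnonneg hpos

lemma memLp_two_sqrt {p : Ω → ℝ} (hp : Integrable p μ) (hp0 : ∀ᵐ x ∂μ, 0 ≤ p x) :
    MemLp (fun x => √(p x)) 2 μ := by
  rw [memLp_two_iff_integrable_sq (Real.continuous_sqrt.comp_aestronglyMeasurable hp.1)]
  exact hp.congr (hp0.mono fun x hx => (Real.sq_sqrt hx).symm)

lemma integral_sqrt_mul_sqrt_le {p q : Ω → ℝ} (hp : Integrable p μ) (hq : Integrable q μ)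
    (hp0 : ∀ᵐ x ∂μ, 0 ≤ p x) (hq0 : ∀ᵐ x ∂μ, 0 ≤ q x) :
    ∫ x, √(p x) * √(q x) ∂μ ≤ √(∫ x, p x ∂μ) * √(∫ x, q x ∂μ) := by
  have hsq : ∀ {p : Ω → ℝ}, (∀ᵐ x ∂μ, 0 ≤ p x) → ∫ x, √(p x) ^ (2 : ℝ) ∂μ = ∫ x, p x ∂μ :=
    fun h0 => integral_congr_ae (h0.mono fun x hx => by simp [Real.sq_sqrt hx])
  have hholder := integral_mul_le_Lp_mul_Lq_of_nonneg (μ := μ) Real.HolderConjugate.two_two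
    (f := fun x => √(p x)) (g := fun x => √(q x)) (.of_forall fun x => Real.sqrt_nonneg _)
    (.of_forall fun x => Real.sqrt_nonneg _) (by simpa using memLp_two_sqrt hp hp0)
    (by simpa using memLp_two_sqrt hq hq0)
  rwa [hsq hp0, hsq hq0, ← Real.sqrt_eq_rpow, ← Real.sqrt_eq_rpow] at hholder

lemma hypClose_iff_norm_sub_le {k : ℝ} {a b : ℂ} (hk : 0 ≤ k) (ha : 0 ≤ a.im) (hb : 0 ≤ b.im) :
    HypClose k a b ↔ ‖a - b‖ ≤ √k * (√a.im * √b.im) := by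
  rw [← Real.sqrt_mul ha, ← Real.sqrt_mul hk, Real.le_sqrt (norm_nonneg _) (by positivity),
    HypClose]

lemma hypStrictClose_iff_norm_sub_lt {k : ℝ} {a b : ℂ} (hk : 0 ≤ k) (ha : 0 ≤ a.im) :
    HypStrictClose k a b ↔ ‖a - b‖ < √k * (√a.im * √b.im) := by
  rw [← Real.sqrt_mul ha, ← Real.sqrt_mul hk, Real.lt_sqrt (norm_nonneg _), HypStrictClose]

variable {f g : Ω → ℂ} {k : ℝ}

lemma im_integral (hf : Integrable f μ) : (∫ x, f x ∂μ).im = ∫ x, (f x).im ∂μ :=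
  (integral_im (𝕜 := ℂ) hf).symm

lemma integrable_sqrt_im_mul_sqrt_im (hf : Integrable f μ) (hg : Integrable g μ)
    (hf0 : ∀ᵐ x ∂μ, 0 ≤ (f x).im) (hg0 : ∀ᵐ x ∂μ, 0 ≤ (g x).im) :
    Integrable (fun x => √k * (√(f x).im * √(g x).im)) μ :=
  ((memLp_two_sqrt hf.im hf0).integrable_mul (memLp_two_sqrt hg.im hg0)).const_mul _

lemma integral_sqrt_im_mul_sqrt_im_le (hf : Integrable f μ) (hg : Integrable g μ)
    (hf0 : ∀ᵐ x ∂μ, 0 ≤ (f x).im) (hg0 : ∀ᵐ x ∂μ, 0 ≤ (g x).im) :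
    ∫ x, √k * (√(f x).im * √(g x).im) ∂μ ≤
      √k * (√(∫ x, f x ∂μ).im * √(∫ x, g x ∂μ).im) := by
  rw [integral_const_mul, im_integral hf, im_integral hg]
  gcongr
  exact integral_sqrt_mul_sqrt_le hf.im hg.im hf0 hg0

lemma im_integral_nonneg (hf : Integrable f μ) (hf0 : ∀ᵐ x ∂μ, 0 ≤ (f x).im) :
    0 ≤ (∫ x, f x ∂μ).im := by
  rw [im_integral hf]
  exact integral_nonneg_of_ae hf0

lemma hypClose_integral (hk : 0 ≤ k) (hf : Integrable f μ) (hg : Integrable g μ)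
    (hf0 : ∀ᵐ x ∂μ, 0 ≤ (f x).im) (hg0 : ∀ᵐ x ∂μ, 0 ≤ (g x).im)
    (h : ∀ᵐ x ∂μ, HypClose k (f x) (g x)) : HypClose k (∫ x, f x ∂μ) (∫ x, g x ∂μ) := by
  rw [hypClose_iff_norm_sub_le hk (im_integral_nonneg hf hf0) (im_integral_nonneg hg hg0),
    ← integral_sub hf hg]
  calc ‖∫ x, f x - g x ∂μ‖ ≤ ∫ x, ‖f x - g x‖ ∂μ := norm_integral_le_integral_norm _
    _ ≤ ∫ x, √k * (√(f x).im * √(g x).im) ∂μ := by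
      refine integral_mono_ae (hf.sub hg).norm (integrable_sqrt_im_mul_sqrt_im hf hg hf0 hg0) ?_
      filter_upwards [hf0, hg0, h] with x hfx hgx hclose using
        (hypClose_iff_norm_sub_le hk hfx hgx).1 hclose
    _ ≤ √k * (√(∫ x, f x ∂μ).im * √(∫ x, g x ∂μ).im) :=
      integral_sqrt_im_mul_sqrt_im_le hf hg hf0 hg0

lemma hypStrictClose_integral (hk : 0 ≤ k) (hf : Integrable f μ) (hg : Integrable g μ)
    (hf0 : ∀ᵐ x ∂μ, 0 ≤ (f x).im) (hg0 : ∀ᵐ x ∂μ, 0 ≤ (g x).im)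
    (h : ∀ᵐ x ∂μ, HypClose k (f x) (g x)) (hstrict : ∃ᶠ x in ae μ, HypStrictClose k (f x) (g x)) :
    HypStrictClose k (∫ x, f x ∂μ) (∫ x, g x ∂μ) := by
  rw [hypStrictClose_iff_norm_sub_lt hk (im_integral_nonneg hf hf0), ← integral_sub hf hg]
  calc ‖∫ x, f x - g x ∂μ‖ ≤ ∫ x, ‖f x - g x‖ ∂μ := norm_integral_le_integral_norm _
    _ < ∫ x, √k * (√(f x).im * √(g x).im) ∂μ := by
      refine integral_lt_integral_of_frequently_lt (hf.sub hg).norm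
        (integrable_sqrt_im_mul_sqrt_im hf hg hf0 hg0) ?_ ?_
      · filter_upwards [hf0, hg0, h] with x hfx hgx hclose using
          (hypClose_iff_norm_sub_le hk hfx hgx).1 hclose
      · exact (hstrict.and_eventually hf0).mono fun x hx =>
          (hypStrictClose_iff_norm_sub_lt hk hx.2).1 hx.1
    _ ≤ √k * (√(∫ x, f x ∂μ).im * √(∫ x, g x ∂μ).im) :=
      integral_sqrt_im_mul_sqrt_im_le hf hg hf0 hg0

end IntegralHypClose

/-- The coefficient `∫ -1/(X + r Y) dμ(r)` of `w₋₁` in `t₀`, with `z₋₁ = -X` and `z₀ = -Y`. -/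
noncomputable def firstIntegral (μ : Measure ℝ) (X Y : ℂ) : ℂ := ∫ r : ℝ, negInv (X + r * Y) ∂μ

/-- The coefficient `∫ -r/(X + r Y) dμ(r)` of `w₀` in `t₀`, with `z₋₁ = -X` and `z₀ = -Y`. -/
noncomputable def lastIntegral (μ : Measure ℝ) (X Y : ℂ) : ℂ := ∫ r : ℝ, r * negInv (X + r * Y) ∂μ

section BaseIntegrals

variable {X Y : ℂ} {r : ℝ}

lemma negInv_add_mul_im_pos (hX : 0 < X.im) (hY : 0 < Y.im) (hr : 0 ≤ r) :
    0 < (negInv (X + r * Y)).im :=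
  negInv_im_pos (im_add_mul_pos hr hX hY)

lemma mul_negInv_add_mul_im_nonneg (hX : 0 < X.im) (hY : 0 < Y.im) (hr : 0 ≤ r) :
    0 ≤ ((r : ℂ) * negInv (X + r * Y)).im :=
  im_ofReal_mul_nonneg hr (negInv_add_mul_im_pos hX hY hr)

lemma norm_negInv_add_mul_le (hX : 0 < X.im) (hY : 0 < Y.im) (hr : 0 ≤ r) :
    ‖negInv (X + r * Y)‖ ≤ 1 / X.im := by
  refine norm_negInv_le hX ?_
  simpa using mul_nonneg hr hY.le

lemma norm_mul_negInv_add_mul_le (hX : 0 < X.im) (hY : 0 < Y.im) (hr : 0 ≤ r) :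
    ‖(r : ℂ) * negInv (X + r * Y)‖ ≤ 1 / Y.im := by
  rw [norm_mul, Complex.norm_real, Real.norm_of_nonneg hr]
  rcases hr.eq_or_lt with rfl | hr
  · simpa using hY.le
  have hle : r * Y.im ≤ (X + r * Y).im := by simpa using hX.le
  calc r * ‖negInv (X + r * Y)‖ ≤ r * (1 / (r * Y.im)) := by
        gcongr
        exact norm_negInv_le (by positivity) hle
    _ = 1 / Y.im := by field_simp

lemma measurable_negInv_add_mul : Measurable fun r : ℝ => negInv (X + r * Y) := by
  unfold negInv
  fun_prop

lemma measurable_mul_negInv_add_mul : Measurable fun r : ℝ => (r : ℂ) * negInv (X + r * Y) :=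
  Complex.measurable_ofReal.mul measurable_negInv_add_mul

lemma HypClose.negInv_add_mul {k : ℝ} {x y x' y' : ℂ} (hxx' : HypClose k x x')
    (hyy' : HypClose k y y') (hr : 0 ≤ r) (hx : 0 < x.im) (hy : 0 < y.im) (hx' : 0 < x'.im)
    (hy' : 0 < y'.im) : HypClose k (_root_.negInv (x + r * y)) (_root_.negInv (x' + r * y')) :=
  (hxx'.add_mul hr hx hx' hy hy' hyy').negInv (im_add_mul_pos hr hx hy) (im_add_mul_pos hr hx' hy')

lemma HypStrictClose.negInv_add_mul {k : ℝ} {x y x' y' : ℂ} (hxx' : HypStrictClose k x x')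
    (hyy' : HypClose k y y') (hr : 0 ≤ r) (hx : 0 < x.im) (hy : 0 < y.im) (hx' : 0 < x'.im)
    (hy' : 0 < y'.im) :
    HypStrictClose k (_root_.negInv (x + r * y)) (_root_.negInv (x' + r * y')) :=
  (hxx'.add_mul hr hx hx' hy hy' hyy').negInv (im_add_mul_pos hr hx hy) (im_add_mul_pos hr hx' hy')

lemma mul_div_sq_le_im_mul_negInv {δ R : ℝ} (hX : 0 < X.im) (hδ : δ ≤ X.im) (hY : 0 < Y.im)
    (hXR : ‖X‖ ≤ R) (hYR : ‖Y‖ ≤ R) (hr : 0 ≤ r) :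
    δ / R ^ 2 * (r / (1 + r) ^ 2) ≤ ((r : ℂ) * negInv (X + r * Y)).im := by
  have hpos := im_add_mul_pos hr hX hY
  have hnorm_pos := norm_pos_of_im_pos hpos
  have hle : δ ≤ (X + r * Y).im := hδ.trans (by simpa using mul_nonneg hr hY.le)
  have hnorm : ‖X + r * Y‖ ≤ R * (1 + r) :=
    calc ‖X + r * Y‖ ≤ ‖X‖ + r * ‖Y‖ := by
          simpa [Real.norm_of_nonneg hr, abs_of_nonneg hr] using norm_add_le X (r * Y)
      _ ≤ R + r * R := by gcongr
      _ = R * (1 + r) := by ring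
  calc δ / R ^ 2 * (r / (1 + r) ^ 2) = r * (δ / (R * (1 + r)) ^ 2) := by
        rw [mul_pow, div_mul_div_comm, mul_comm δ, mul_div_assoc]
    _ ≤ r * ((X + r * Y).im / ‖X + r * Y‖ ^ 2) := by gcongr
    _ = ((r : ℂ) * negInv (X + r * Y)).im := by rw [Complex.im_ofReal_mul, negInv_im]

variable {μ : Measure ℝ}

lemma integrable_negInv_add_mul [IsFiniteMeasure μ] (hμ : ∀ᵐ r ∂μ, 0 ≤ r) (hX : 0 < X.im)
    (hY : 0 < Y.im) : Integrable (fun r : ℝ => negInv (X + r * Y)) μ :=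
  .of_bound measurable_negInv_add_mul.aestronglyMeasurable (1 / X.im)
    (hμ.mono fun _ => norm_negInv_add_mul_le hX hY)

lemma integrable_mul_negInv_add_mul [IsFiniteMeasure μ] (hμ : ∀ᵐ r ∂μ, 0 ≤ r) (hX : 0 < X.im)
    (hY : 0 < Y.im) : Integrable (fun r : ℝ => (r : ℂ) * negInv (X + r * Y)) μ :=
  .of_bound measurable_mul_negInv_add_mul.aestronglyMeasurable (1 / Y.im)
    (hμ.mono fun _ => norm_mul_negInv_add_mul_le hX hY)

lemma isHypNonexpansive₂_firstIntegral [IsFiniteMeasure μ] [NeZero μ] (hμ : ∀ᵐ r ∂μ, 0 ≤ r) :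
    IsHypNonexpansive₂ (firstIntegral μ) := by
  have him : ∀ {x y : ℂ}, 0 < x.im → 0 < y.im → ∀ᵐ r : ℝ ∂μ, 0 < (negInv (x + r * y)).im :=
    fun hx hy => hμ.mono fun _ => negInv_add_mul_im_pos hx hy
  refine ⟨fun hx hy => ?_, fun hx hy hx' hy' hxx' hyy' => ?_⟩
  · have hint := integrable_negInv_add_mul hμ hx hy
    rw [firstIntegral, im_integral hint]
    exact integral_pos_of_frequently_pos hint.im ((him hx hy).mono fun _ => le_of_lt)
      (him hx hy).frequently
  · exact hypClose_integral (hxx'.nonneg hx hx') (integrable_negInv_add_mul hμ hx hy)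
      (integrable_negInv_add_mul hμ hx' hy') ((him hx hy).mono fun _ => le_of_lt)
      ((him hx' hy').mono fun _ => le_of_lt)
      (hμ.mono fun _ hr => hxx'.negInv_add_mul hyy' hr hx hy hx' hy')

lemma isFirstCoefficient_firstIntegral [IsProbabilityMeasure μ] (hμ : ∀ᵐ r ∂μ, 0 ≤ r) :
    IsFirstCoefficient (firstIntegral μ) where
  toIsHypNonexpansive₂ := isHypNonexpansive₂_firstIntegral hμ
  norm_le {x y} hx hy := by
    simpa [firstIntegral] using norm_integral_le_of_norm_le_const
      (hμ.mono fun _ => norm_negInv_add_mul_le hx hy)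

lemma lastIntegral_im_pos [IsFiniteMeasure μ] (hμ : ∀ᵐ r ∂μ, 0 ≤ r) (hpos : ∃ᶠ r in ae μ, 0 < r)
    (hX : 0 < X.im) (hY : 0 < Y.im) : 0 < (lastIntegral μ X Y).im := by
  have hint := integrable_mul_negInv_add_mul hμ hX hY
  rw [lastIntegral, im_integral hint]
  refine integral_pos_of_frequently_pos hint.im
    (hμ.mono fun _ => mul_negInv_add_mul_im_nonneg hX hY) (hpos.mono fun r hr => ?_)
  simpa using mul_pos hr (negInv_add_mul_im_pos hX hY hr.le)

lemma isHypNonexpansive₂_lastIntegral [IsFiniteMeasure μ] (hμ : ∀ᵐ r ∂μ, 0 ≤ r)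
    (hpos : ∃ᶠ r in ae μ, 0 < r) : IsHypNonexpansive₂ (lastIntegral μ) :=
  ⟨lastIntegral_im_pos hμ hpos, fun hx hy hx' hy' hxx' hyy' =>
    hypClose_integral (hxx'.nonneg hx hx') (integrable_mul_negInv_add_mul hμ hx hy)
      (integrable_mul_negInv_add_mul hμ hx' hy')
      (hμ.mono fun _ => mul_negInv_add_mul_im_nonneg hx hy)
      (hμ.mono fun _ => mul_negInv_add_mul_im_nonneg hx' hy')
      (hμ.mono fun r hr => (hxx'.negInv_add_mul hyy' hr hx hy hx' hy').real_mul r)⟩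

lemma lastIntegral_strict [IsFiniteMeasure μ] (hμ : ∀ᵐ r ∂μ, 0 ≤ r) (hpos : ∃ᶠ r in ae μ, 0 < r)
    {k : ℝ} {x y x' y' : ℂ} (hx : 0 < x.im) (hy : 0 < y.im) (hx' : 0 < x'.im) (hy' : 0 < y'.im)
    (hxx' : HypStrictClose k x x') (hyy' : HypClose k y y') :
    HypStrictClose k (lastIntegral μ x y) (lastIntegral μ x' y') :=
  hypStrictClose_integral (hyy'.nonneg hy hy') (integrable_mul_negInv_add_mul hμ hx hy)
    (integrable_mul_negInv_add_mul hμ hx' hy')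
    (hμ.mono fun _ => mul_negInv_add_mul_im_nonneg hx hy)
    (hμ.mono fun _ => mul_negInv_add_mul_im_nonneg hx' hy')
    (hμ.mono fun r hr => (hxx'.hypClose.negInv_add_mul hyy' hr hx hy hx' hy').real_mul r)
    (hpos.mono fun _ hr => (hxx'.negInv_add_mul hyy' hr.le hx hy hx' hy').real_mul hr.ne')

lemma exists_norm_lastIntegral_le [IsFiniteMeasure μ] (hμ : ∀ᵐ r ∂μ, 0 ≤ r) :
    ∃ C : ℝ, ∀ {x y : ℂ}, 0 < x.im → 0 < y.im → ‖lastIntegral μ x y‖ ≤ C / y.im := by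
  refine ⟨μ.real Set.univ, fun {x y} hx hy => ?_⟩
  rw [div_eq_mul_one_div, mul_comm]
  exact norm_integral_le_of_norm_le_const (hμ.mono fun _ => norm_mul_negInv_add_mul_le hx hy)

/-- Dominated convergence: in a cone at `c` the integrand is bounded by the aperture `M`. -/
lemma tendsto_sub_mul_lastIntegral [IsFiniteMeasure μ] (hμ : ∀ᵐ r ∂μ, 0 ≤ r) (hX : 0 < X.im)
    {c M : ℝ} : Tendsto (fun p : ℂ × ℂ => (p.2 - c) * lastIntegral μ p.1 p.2)
      (nontangential X c M) (𝓝 0) := by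
  have hlim : Tendsto (fun p : ℂ × ℂ => ∫ r : ℝ, (p.2 - c) * (r * negInv (p.1 + r * p.2)) ∂μ)
      (nontangential X c M) (𝓝 (∫ _, (0 : ℂ) ∂μ)) := by
    refine tendsto_integral_filter_of_dominated_convergence (fun _ => M)
      (.of_forall fun p => (measurable_mul_negInv_add_mul.const_mul _).aestronglyMeasurable)
      ?_ (integrable_const M) (.of_forall fun r => ?_)
    · filter_upwards [eventually_nontangential] with p ⟨hx, hy, hcone⟩
      filter_upwards [hμ] with r hr
      rw [norm_mul]
      calc ‖p.2 - c‖ * ‖(r : ℂ) * negInv (p.1 + r * p.2)‖ ≤ M * p.2.im * (1 / p.2.im) :=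
            mul_le_mul hcone (norm_mul_negInv_add_mul_le hx hy hr) (norm_nonneg _)
              ((norm_nonneg _).trans hcone)
        _ = M := by field_simp
    · have hden : X + r * (c : ℂ) ≠ 0 := ne_zero_of_im_pos (by simpa using hX)
      simpa using (tendsto_snd_nontangential.sub_const (c : ℂ)).mul ((tendsto_negInv
        (tendsto_fst_nontangential.add (tendsto_snd_nontangential.const_mul (r : ℂ)))
        hden).const_mul (r : ℂ))
  simpa [lastIntegral, integral_const_mul] using hlim

lemma integrable_div_one_add_sq [IsFiniteMeasure μ] (hμ : ∀ᵐ r ∂μ, 0 ≤ r) :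
    Integrable (fun r : ℝ => r / (1 + r) ^ 2) μ := by
  refine .of_bound (by fun_prop : Measurable _).aestronglyMeasurable 1 (hμ.mono fun r hr => ?_)
  rw [Real.norm_of_nonneg (by positivity), div_le_one (by positivity)]
  nlinarith

lemma exists_le_im_lastIntegral [IsFiniteMeasure μ] (hμ : ∀ᵐ r ∂μ, 0 ≤ r)
    (hpos : ∃ᶠ r in ae μ, 0 < r) (hX : 0 < X.im) {c M : ℝ} : ∃ κ : ℝ, 0 < κ ∧
      ∀ᶠ p : ℂ × ℂ in nontangential X c M, κ ≤ (lastIntegral μ p.1 p.2).im := by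
  set R : ℝ := ‖X‖ + ‖(c : ℂ)‖ + 1
  have hint := integrable_div_one_add_sq hμ
  have hweight : 0 < ∫ r : ℝ, r / (1 + r) ^ 2 ∂μ :=
    integral_pos_of_frequently_pos hint (hμ.mono fun r hr => by positivity)
      (hpos.mono fun r hr => by positivity)
  refine ⟨X.im / 2 / R ^ 2 * ∫ r : ℝ, r / (1 + r) ^ 2 ∂μ, by positivity, ?_⟩
  have hXR : ‖X‖ < R := by linarith [norm_nonneg (c : ℂ)]
  have hcR : ‖(c : ℂ)‖ < R := by linarith [norm_nonneg X]
  filter_upwards [eventually_nontangential,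
    (tendsto_im tendsto_fst_nontangential).eventually_const_le (half_lt_self hX),
    tendsto_fst_nontangential.norm.eventually_le_const hXR,
    tendsto_snd_nontangential.norm.eventually_le_const hcR] with p ⟨hx, hy, _⟩ him hxR hyR
  have hkernel := integrable_mul_negInv_add_mul hμ hx hy
  rw [lastIntegral, im_integral hkernel, ← integral_const_mul]
  exact integral_mono_ae (hint.const_mul _) hkernel.im
    (hμ.mono fun r hr => mul_div_sq_le_im_mul_negInv hx him hy hxR hyR hr)

theorem isAdmissible_lastIntegral [IsFiniteMeasure μ] (hμ : ∀ᵐ r ∂μ, 0 ≤ r)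
    (hpos : ∃ᶠ r in ae μ, 0 < r) : IsAdmissible (lastIntegral μ) where
  toIsHypNonexpansive₂ := isHypNonexpansive₂_lastIntegral hμ hpos
  strict := lastIntegral_strict hμ hpos
  exists_norm_le := exists_norm_lastIntegral_le hμ
  tendsto_sub_mul hX := tendsto_sub_mul_lastIntegral hμ hX
  exists_le_im hX := exists_le_im_lastIntegral hμ hpos hX

lemma integral_div_eq_firstIntegral_add_lastIntegral [IsFiniteMeasure μ] (hμ : ∀ᵐ r ∂μ, 0 ≤ r)
    (hX : 0 < X.im) (hY : 0 < Y.im) (w₀ w₁ : ℂ) :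
    ∫ r : ℝ, (w₀ + w₁ * r) / (-X + -Y * r) ∂μ =
      firstIntegral μ X Y * w₀ + lastIntegral μ X Y * w₁ := by
  rw [firstIntegral, lastIntegral, ← integral_mul_const, ← integral_mul_const, ← integral_add
    ((integrable_negInv_add_mul hμ hX hY).mul_const _)
    ((integrable_mul_negInv_add_mul hμ hX hY).mul_const _)]
  congr 1 with r
  have hden : -X + -Y * (r : ℂ) = -(X + r * Y) := by ring
  rw [hden, negInv, div_neg, div_eq_mul_inv]
  ring

lemma firstIntegral_mul_add_lastIntegral_mul [IsProbabilityMeasure μ] (hμ : ∀ᵐ r ∂μ, 0 ≤ r)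
    (hX : 0 < X.im) (hY : 0 < Y.im) :
    firstIntegral μ X Y * -X + lastIntegral μ X Y * -Y = 1 := by
  have hone : ∀ᵐ r : ℝ ∂μ, (-X + -Y * r) / (-X + -Y * r) = 1 := by
    filter_upwards [hμ] with r hr
    have hden : -X + -Y * (r : ℂ) = -(X + r * Y) := by ring
    rw [hden]
    exact div_self (neg_ne_zero.2 (ne_zero_of_im_pos (im_add_mul_pos hr hX hY)))
  rw [← integral_div_eq_firstIntegral_add_lastIntegral hμ hX hY, integral_congr_ae hone]
  simp

lemma eq_dirac_of_ae_eq {Ω : Type*} [MeasurableSpace Ω] {ν : Measure Ω} [IsProbabilityMeasure ν]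
    {a : Ω} (h : ∀ᵐ x ∂ν, x = a) : ν = Measure.dirac a := by
  calc ν = ν.map id := Measure.map_id.symm
    _ = ν.map fun _ => a := Measure.map_congr h
    _ = Measure.dirac a := by simp [Measure.map_const]

lemma frequently_pos_of_ne_dirac [IsProbabilityMeasure μ] (hμ : ∀ᵐ r ∂μ, 0 ≤ r)
    (hne : μ ≠ Measure.dirac 0) : ∃ᶠ r in ae μ, 0 < r := by
  contrapose! hne
  refine eq_dirac_of_ae_eq ?_
  filter_upwards [hμ, hne] with r hr hr' using le_antisymm hr' hr

end BaseIntegrals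

/-- A solution `s_{n+1}(z)` of the fixed-point equation in which `T` plays the part of `t_n`. -/
noncomputable def stepSolution (b γ : ℝ) {n : ℕ} (T : (Fin (n + 2) → ℂ) → (Fin (n + 2) → ℂ) → ℂ)
    (z : Fin (n + 3) → ℂ) : ℂ :=
  upperFixedPoint fun s => (z (Fin.last (n + 2)))⁻¹ + γ * T (zprevVec b s z) (eVec b n)

/-- The functional `t_{n+1}` obtained from `T = t_n`. -/
noncomputable def stepFunctional (b γ : ℝ) {n : ℕ} (T : (Fin (n + 2) → ℂ) → (Fin (n + 2) → ℂ) → ℂ)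
    (z w : Fin (n + 3) → ℂ) : ℂ :=
  w (Fin.last (n + 2)) / z (Fin.last (n + 2)) +
    T (zprevVec b (stepSolution b γ T z) z) (wprevVec z w)

/-- The functionals `t_ℓ`. -/
noncomputable def recursionFunctional (b : ℝ) (γ : ℕ → ℝ) (μ : Measure ℝ) :
    (ℓ : ℕ) → (Fin (ℓ + 2) → ℂ) → (Fin (ℓ + 2) → ℂ) → ℂ
  | 0 => fun z w => ∫ r : ℝ, (w 0 + w 1 * r) / (z 0 + z 1 * r) ∂μ
  | ℓ + 1 => stepFunctional b (γ (ℓ + 1)) (recursionFunctional b γ μ ℓ)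

/-- The solutions `s_ℓ`, with the junk value `0` for `ℓ = 0`. -/
noncomputable def recursionSolution (b : ℝ) (γ : ℕ → ℝ) (μ : Measure ℝ) :
    (ℓ : ℕ) → (Fin (ℓ + 2) → ℂ) → ℂ
  | 0 => 0
  | ℓ + 1 => stepSolution b (γ (ℓ + 1)) (recursionFunctional b γ μ ℓ)

/-- For `z` with first and last entries in the lower half-plane and middle entries `x`, the map
`T z` is linear and sends `z` to `1`, and its coefficients at the first and last entries are the
values of `A` and `B` at `(-z₋₁, -z_n)`. -/
def Represents {n : ℕ} (T : (Fin (n + 2) → ℂ) → (Fin (n + 2) → ℂ) → ℂ) (x : Fin n → ℝ)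
    (A B : ℂ → ℂ → ℂ) : Prop :=
  ∀ z : Fin (n + 2) → ℂ, (z 0).im < 0 → (z (Fin.last (n + 1))).im < 0 →
    (∀ i : Fin n, z i.castSucc.succ = x i) → ∃ m : Fin (n + 2) → ℂ,
      m 0 = A (-z 0) (-z (Fin.last (n + 1))) ∧
      m (Fin.last (n + 1)) = B (-z 0) (-z (Fin.last (n + 1))) ∧
      ∑ i, m i * z i = 1 ∧ ∀ w, T z w = ∑ i, m i * w i

section Vectors

variable {n : ℕ} {b : ℝ} {s : ℂ} {z : Fin (n + 3) → ℂ}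

lemma zprevVec_apply (i : Fin (n + 2)) : zprevVec b s z i = z i.castSucc + eVec b n i / s := by
  rcases eq_or_ne i 0 with rfl | hi
  · simp [zprevVec, eVec]
  · simp [zprevVec, eVec, hi, ite_div]

lemma zprevVec_zero : zprevVec b s z 0 = -(-z 0 + (1 - b ^ 2 : ℝ) * negInv s) := by
  simp [zprevVec_apply, eVec, negInv, div_eq_mul_inv, add_comm]

lemma zprevVec_last {c : ℝ} (hc : z (Fin.last (n + 1)).castSucc = c) :
    zprevVec b s z (Fin.last (n + 1)) = -((-c : ℝ) + (b ^ 2 : ℝ) * negInv s) := by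
  simp [zprevVec_apply, eVec, hc, negInv, div_eq_mul_inv, add_comm]

lemma zprevVec_castSucc_succ (i : Fin n) :
    zprevVec b s z i.castSucc.succ = z i.castSucc.castSucc.succ := by
  simp [zprevVec, ← Fin.succ_last, Fin.castSucc_ne_last]

lemma sum_mul_eVec (m : Fin (n + 2) → ℂ) : ∑ i, m i * eVec b n i =
    (1 - b ^ 2 : ℝ) * m 0 + (b ^ 2 : ℝ) * m (Fin.last (n + 1)) := by
  rw [Fintype.sum_eq_add 0 (Fin.last (n + 1)) Fin.last_pos.ne]
  · simp [eVec, mul_comm]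
  · rintro i ⟨hi, hi'⟩
    simp [eVec, hi, hi']

lemma sum_mul_zprevVec (m : Fin (n + 2) → ℂ) : ∑ i, m i * zprevVec b s z i =
    ∑ i, m i * z i.castSucc + (∑ i, m i * eVec b n i) / s := by
  simp_rw [zprevVec_apply, mul_add, Finset.sum_add_distrib, Finset.sum_div, mul_div_assoc]

lemma sum_mul_wprevVec (m : Fin (n + 2) → ℂ) (w : Fin (n + 3) → ℂ) :
    ∑ i, m i * wprevVec z w i = ∑ i, m i * w i.castSucc -
      w (Fin.last (n + 2)) / z (Fin.last (n + 2)) * ∑ i, m i * z i.castSucc := by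
  simp_rw [wprevVec, mul_sub, Finset.sum_sub_distrib, Finset.mul_sum, mul_left_comm]

end Vectors

lemma sum_snoc_mul {n : ℕ} (m : Fin n → ℂ) (q : ℂ) (u : Fin (n + 1) → ℂ) :
    ∑ i, (Fin.snoc m q : Fin (n + 1) → ℂ) i * u i =
      ∑ i, m i * u i.castSucc + q * u (Fin.last n) := by
  simp [Fin.sum_univ_castSucc]

namespace Represents

variable {n : ℕ} {b γ : ℝ} {s : ℂ} {z : Fin (n + 3) → ℂ}
  {T : (Fin (n + 2) → ℂ) → (Fin (n + 2) → ℂ) → ℂ} {x : Fin (n + 1) → ℝ} {A B : ℂ → ℂ → ℂ}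

lemma exists_coeff_zprevVec (hT : Represents T (fun i => x i.castSucc) A B) (hb : b ≠ 0)
    (hb1 : 0 ≤ 1 - b ^ 2) (hz0 : (z 0).im < 0) (hz : ∀ i : Fin (n + 1), z i.castSucc.succ = x i)
    (hs : 0 < s.im) : ∃ m : Fin (n + 2) → ℂ,
      m 0 = A (-z 0 + (1 - b ^ 2 : ℝ) * negInv s)
        ((-x (Fin.last n) : ℝ) + (b ^ 2 : ℝ) * negInv s) ∧
      T (zprevVec b s z) (eVec b n) =
        levelMap (1 - b ^ 2) (b ^ 2) (-x (Fin.last n)) A B (-z 0) (negInv s) ∧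
      ∑ i, m i * z i.castSucc = 1 - T (zprevVec b s z) (eVec b n) / s ∧
      ∀ w, T (zprevVec b s z) w = ∑ i, m i * w i := by
  have hlast : z (Fin.last (n + 1)).castSucc = x (Fin.last n) := hz (Fin.last n)
  have hX := im_add_mul_pos hb1 (by simpa using hz0 : 0 < (-z 0).im) (negInv_im_pos hs)
  have hY := im_ofReal_add_mul_pos (c := -x (Fin.last n)) (by positivity : 0 < b ^ 2)
    (negInv_im_pos hs)
  obtain ⟨m, hm0, hmlast, hmz, hmw⟩ := hT (zprevVec b s z)
    (by rwa [zprevVec_zero, Complex.neg_im, neg_lt_zero])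
    (by rwa [zprevVec_last hlast, Complex.neg_im, neg_lt_zero])
    fun i => (zprevVec_castSucc_succ i).trans (hz i.castSucc)
  rw [zprevVec_zero, zprevVec_last hlast, neg_neg, neg_neg] at hm0 hmlast
  refine ⟨m, hm0, ?_, ?_, hmw⟩
  · rw [hmw, sum_mul_eVec, hm0, hmlast, levelMap]
  · rw [hmw, ← hmz, sum_mul_zprevVec, add_sub_cancel_right]

lemma apply_eVec (hT : Represents T (fun i => x i.castSucc) A B) (hb : b ≠ 0)
    (hb1 : 0 ≤ 1 - b ^ 2) (hz0 : (z 0).im < 0) (hz : ∀ i : Fin (n + 1), z i.castSucc.succ = x i)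
    (hs : 0 < s.im) : T (zprevVec b s z) (eVec b n) =
      levelMap (1 - b ^ 2) (b ^ 2) (-x (Fin.last n)) A B (-z 0) (negInv s) :=
  (hT.exists_coeff_zprevVec hb hb1 hz0 hz hs).elim fun _ h => h.2.1

lemma equation_eq_fixedPointMap (hT : Represents T (fun i => x i.castSucc) A B) (hb : b ≠ 0)
    (hb1 : 0 ≤ 1 - b ^ 2) (hz0 : (z 0).im < 0) (hz : ∀ i : Fin (n + 1), z i.castSucc.succ = x i)
    (hs : 0 < s.im) :
    (z (Fin.last (n + 2)))⁻¹ + γ * T (zprevVec b s z) (eVec b n) =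
      fixedPointMap γ (negInv (-z (Fin.last (n + 2))))
        (levelMap (1 - b ^ 2) (b ^ 2) (-x (Fin.last n)) A B) (-z 0) s := by
  rw [fixedPointMap, hT.apply_eVec hb hb1 hz0 hz hs, negInv_neg]

lemma stepSolution_eq (hT : Represents T (fun i => x i.castSucc) A B) (hb : b ≠ 0)
    (hb1 : 0 ≤ 1 - b ^ 2) (hz0 : (z 0).im < 0) (hz : ∀ i : Fin (n + 1), z i.castSucc.succ = x i) :
    stepSolution b γ T z = solution γ (levelMap (1 - b ^ 2) (b ^ 2) (-x (Fin.last n)) A B)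
      (-z 0) (-z (Fin.last (n + 2))) :=
  upperFixedPoint_congr fun _ => hT.equation_eq_fixedPointMap hb hb1 hz0 hz

lemma stepSolution_spec (hT : Represents T (fun i => x i.castSucc) A B)
    (hA : IsFirstCoefficient A) (hB : IsAdmissible B) (hb : b ≠ 0) (hb1 : 0 ≤ 1 - b ^ 2)
    (hγ : 0 < γ) (hz0 : (z 0).im < 0) (hz : ∀ i : Fin (n + 1), z i.castSucc.succ = x i)
    (hlast : (z (Fin.last (n + 2))).im ≤ 0) (hlast0 : z (Fin.last (n + 2)) ≠ 0) :
    0 < (stepSolution b γ T z).im ∧ (z (Fin.last (n + 2)))⁻¹ +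
      γ * T (zprevVec b (stepSolution b γ T z) z) (eVec b n) = stepSolution b γ T z := by
  have hF := hB.levelMap (c := -x (Fin.last n)) hA hb1 (by positivity : 0 < b ^ 2)
  have hspec := hF.solution_spec hγ (X := -z 0) (by simpa using hz0)
    (Y := -z (Fin.last (n + 2))) (by simpa using hlast) (neg_ne_zero.2 hlast0)
  rw [← hT.stepSolution_eq hb hb1 hz0 hz] at hspec
  exact ⟨hspec.1, (hT.equation_eq_fixedPointMap hb hb1 hz0 hz hspec.1).trans hspec.2⟩

lemma eq_stepSolution (hT : Represents T (fun i => x i.castSucc) A B)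
    (hA : IsFirstCoefficient A) (hB : IsAdmissible B) (hb : b ≠ 0) (hb1 : 0 ≤ 1 - b ^ 2)
    (hγ : 0 < γ) (hz0 : (z 0).im < 0) (hz : ∀ i : Fin (n + 1), z i.castSucc.succ = x i)
    (hlast : (z (Fin.last (n + 2))).im ≤ 0) (hlast0 : z (Fin.last (n + 2)) ≠ 0) (hs : 0 < s.im)
    (h : (z (Fin.last (n + 2)))⁻¹ + γ * T (zprevVec b s z) (eVec b n) = s) :
    s = stepSolution b γ T z := by
  have hF := hB.levelMap (c := -x (Fin.last n)) hA hb1 (by positivity : 0 < b ^ 2)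
  obtain ⟨him, heq⟩ := hT.stepSolution_spec hA hB hb hb1 hγ hz0 hz hlast hlast0
  rw [hT.equation_eq_fixedPointMap hb hb1 hz0 hz] at h heq
  · exact hF.fixedPoint_unique hγ (by simpa using hz0)
      (negInv_im_nonneg (by simpa using hlast)) hs him h heq
  · exact him
  · exact hs

theorem step (hT : Represents T (fun i => x i.castSucc) A B) (hA : IsFirstCoefficient A)
    (hB : IsAdmissible B) (hb : b ≠ 0) (hb1 : 0 ≤ 1 - b ^ 2) (hγ : 0 < γ) :
    let F := levelMap (1 - b ^ 2) (b ^ 2) (-x (Fin.last n)) A B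
    Represents (stepFunctional b γ T) x
      (fun X Y => A (X + (1 - b ^ 2 : ℝ) * negInv (solution γ F X Y))
        ((-x (Fin.last n) : ℝ) + (b ^ 2 : ℝ) * negInv (solution γ F X Y)))
      (schurStep γ F) := by
  intro F z hz0 hzlast hz
  have hzlast0 : z (Fin.last (n + 2)) ≠ 0 := fun h => by simp [h] at hzlast
  have hF : IsAdmissible F := hB.levelMap hA hb1 (by positivity : 0 < b ^ 2)
  have hs := (hT.stepSolution_spec hA hB hb hb1 hγ hz0 hz hzlast.le hzlast0).1
  have hs0 := ne_zero_of_im_pos hs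
  obtain ⟨m, hm0, (hvalue : _ = F _ _), hmz, hmw⟩ :=
    hT.exists_coeff_zprevVec hb hb1 hz0 hz hs
  beta_reduce
  rw [hF.schurStep_eq hγ (by simpa using hz0) (by simpa using hzlast), solvedValue,
    ← hT.stepSolution_eq hb hb1 hz0 hz, ← hvalue]
  set s := stepSolution b γ T z
  set τ := T (zprevVec b s z) (eVec b n)
  refine ⟨Fin.snoc m (τ / (s * z (Fin.last (n + 2)))), ?_, ?_, ?_, fun w => ?_⟩
  · rw [Fin.snoc_apply_zero, hm0]
  · rw [Fin.snoc_last, neg_mul, div_neg, neg_neg, mul_comm]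
  · rw [sum_snoc_mul, hmz]
    field_simp
    ring
  · rw [stepFunctional, hmw, sum_mul_wprevVec, hmz, sum_snoc_mul]
    field_simp
    ring

end Represents

lemma represents_recursionFunctional_zero {b : ℝ} {γ : ℕ → ℝ} {μ : Measure ℝ}
    [IsProbabilityMeasure μ] (hμ : ∀ᵐ r ∂μ, 0 ≤ r) (x : Fin 0 → ℝ) :
    Represents (recursionFunctional b γ μ 0) x (firstIntegral μ) (lastIntegral μ) := by
  intro z hz0 hz1 _
  have hX : 0 < (-z 0).im := by simpa using hz0
  have hY : 0 < (-z 1).im := by simpa using hz1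
  refine ⟨![firstIntegral μ (-z 0) (-z 1), lastIntegral μ (-z 0) (-z 1)], rfl, rfl, ?_,
    fun w => ?_⟩
  · simpa using firstIntegral_mul_add_lastIntegral_mul hμ hX hY
  · simpa [recursionFunctional] using
      integral_div_eq_firstIntegral_add_lastIntegral hμ hX hY (w 0) (w 1)

theorem exists_represents_recursionFunctional {b : ℝ} {γ : ℕ → ℝ} {μ : Measure ℝ}
    [IsProbabilityMeasure μ] (hb : b ≠ 0) (hb1 : 0 ≤ 1 - b ^ 2) (hγ : ∀ ℓ, 0 < γ (ℓ + 1))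
    (hμ : ∀ᵐ r ∂μ, 0 ≤ r) (hpos : ∃ᶠ r in ae μ, 0 < r) (ℓ : ℕ) (x : Fin ℓ → ℝ) :
    ∃ A B, IsFirstCoefficient A ∧ IsAdmissible B ∧
      Represents (recursionFunctional b γ μ ℓ) x A B := by
  induction ℓ with
  | zero => exact ⟨_, _, isFirstCoefficient_firstIntegral hμ, isAdmissible_lastIntegral hμ hpos,
      represents_recursionFunctional_zero hμ x⟩
  | succ ℓ ih =>
    obtain ⟨A, B, hA, hB, hT⟩ := ih fun i => x i.castSucc
    have hβ : 0 < b ^ 2 := by positivity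
    have hF := hB.levelMap (c := -x (Fin.last ℓ)) hA hb1 hβ
    exact ⟨_, _, hA.comp_affine hb1 hβ (hF.isHypNonexpansive₂_negInv_solution (hγ ℓ)),
      hF.schurStep (hγ ℓ), hT.step hA hB hb hb1 (hγ ℓ)⟩

lemma InDomZ.eq_ofReal_re {ℓ : ℕ} {z : Fin (ℓ + 2) → ℂ} (hz : InDomZ z) (i : Fin ℓ) :
    z i.castSucc.succ = ((z i.castSucc.succ).re : ℂ) := by
  have him := hz.2.1 i.castSucc.succ (Fin.succ_ne_zero _)
    (by simp [← Fin.succ_last, Fin.castSucc_ne_last])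
  exact Complex.ext rfl (by simpa using him)

theorem fixed_point_exists_unique
    (bσ : ℝ) (hbσ : bσ ≠ 0) (hbσ1 : |bσ| ≤ 1)
    (γ : ℕ → ℝ) (hγ : ∀ ℓ, 1 ≤ ℓ → 0 < γ ℓ)
    (μ0 : Measure ℝ) (hμ0prob : IsProbabilityMeasure μ0)
    (hμ0supp : μ0 (Set.Iio 0) = 0)
    (hμ0ne : μ0 ≠ Measure.dirac 0) :
    ∃ (t : (ℓ : ℕ) → (Fin (ℓ + 2) → ℂ) → (Fin (ℓ + 2) → ℂ) → ℂ)
      (s : (ℓ : ℕ) → (Fin (ℓ + 2) → ℂ) → ℂ),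
      -- `t₀((z₋₁,z₀),(w₋₁,w₀)) = ∫ (w₋₁ + w₀ x)/(z₋₁ + z₀ x) dμ₀(x)`
      (∀ zv : Fin 2 → ℂ, InDomZ zv → ∀ wv : Fin 2 → ℂ,
        t 0 zv wv = ∫ x, (wv 0 + wv 1 * x) / (zv 0 + zv 1 * x) ∂μ0) ∧
      -- the recursion, existence, and uniqueness at each level `ℓ + 1 ≥ 1`
      (∀ ℓ : ℕ, ∀ zv : Fin (ℓ + 3) → ℂ, InDomZ zv →
        -- `s_{ℓ+1}(z) ∈ ℂ⁺` solves the fixed-point equation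
        (0 < (s (ℓ + 1) zv).im ∧
          s (ℓ + 1) zv = (zv (Fin.last (ℓ + 2)))⁻¹ +
            (γ (ℓ + 1) : ℂ) * t ℓ (zprevVec bσ (s (ℓ + 1) zv) zv) (eVec bσ ℓ)) ∧
        -- and it is the unique solution in `ℂ⁺`
        (∀ s' : ℂ, 0 < s'.im →
          s' = (zv (Fin.last (ℓ + 2)))⁻¹ +
            (γ (ℓ + 1) : ℂ) * t ℓ (zprevVec bσ s' zv) (eVec bσ ℓ) →
          s' = s (ℓ + 1) zv) ∧
        -- `t_{ℓ+1}` is given by the recursion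
        (∀ wv : Fin (ℓ + 3) → ℂ,
          t (ℓ + 1) zv wv = wv (Fin.last (ℓ + 2)) / zv (Fin.last (ℓ + 2)) +
            t ℓ (zprevVec bσ (s (ℓ + 1) zv) zv) (wprevVec zv wv))) := by
  have hb1 : 0 ≤ 1 - bσ ^ 2 := sub_nonneg.2 ((sq_le_one_iff_abs_le_one bσ).2 hbσ1)
  have hγ' : ∀ ℓ, 0 < γ (ℓ + 1) := fun ℓ => hγ (ℓ + 1) le_add_self
  have hμ0 : ∀ᵐ r ∂μ0, 0 ≤ r :=
    (measure_eq_zero_iff_ae_notMem.1 hμ0supp).mono fun _ hr => not_lt.1 hr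
  have hpos := frequently_pos_of_ne_dirac hμ0 hμ0ne
  refine ⟨recursionFunctional bσ γ μ0, recursionSolution bσ γ μ0, fun _ _ _ => rfl,
    fun ℓ zv hz => ?_⟩
  obtain ⟨A, B, hA, hB, hT⟩ := exists_represents_recursionFunctional hbσ hb1 hγ' hμ0 hpos ℓ
    fun i => (zv i.castSucc.castSucc.succ).re
  have hreal := hz.eq_ofReal_re
  obtain ⟨hfirst, -, hlast, hlast0⟩ := hz
  obtain ⟨him, heq⟩ := hT.stepSolution_spec (x := fun i => (zv i.castSucc.succ).re) hA hB hbσ hb1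
    (hγ' ℓ) hfirst hreal hlast hlast0
  exact ⟨⟨him, heq.symm⟩, fun s' hs' h' => hT.eq_stepSolution (x := fun i =>
    (zv i.castSucc.succ).re) hA hB hbσ hb1 (hγ' ℓ) hfirst hreal hlast hlast0 hs' h'.symm,
    fun _ => rfl⟩
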